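/- arXiv:1812.06369 — 2 statements merged into one kernel-verified Lean document; each statement's English description precedes it below -/
import Mathlib

section
/- Let σ, B > 0, let m be a positive integer, let r satisfy m√(2σ/π) < r ≤ 1/(mB), and let f : ℝ^m → ℝ^m be twice continuously differentiable with f(0) = 0, ∂f_i/∂x_j(0) = 0 for all i, j ∈ [m], and |∂²f_i/(∂x_j ∂x_{j'})(x)| ≤ B for all i, j, j' ∈ [m] and all x with ‖x‖₁ < r. Let P be the law of X + f(X) where X ~ N(0, σ I_m). Then P is a (σ, ε)-blurring for ε = (4(m+2)m²B√(2σ/π) + 3m⁵B²σ)/8 + (1 − Bmr)·e^{−(r/(2√σ) − m/√(2π))²/m}. -/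
/-!
The law `P` of `X + f(X)` is compared with `γ = N(0, σ I_m)` itself, i.e. the blurred measure is
the Dirac mass at `0`. It suffices to bound `P(A) - γ(A)` from above for every measurable `A`,
since passing to complements gives the other inequality.

Write `T x = x + f x`, `U = {‖x‖₁ < r}` and let `φ` be the density of `γ`. On `U` the first
derivatives of `f` are at most `B‖x‖₁` and `|f_i| ≤ B‖x‖₁²/2`, so `T` is injective on `U`
(`QuadBound.injOn`) with Jacobian determinant `d ≥ 1 - mB‖x‖₁ > 0` (`one_sub_le_det_one_add`).
The change of variables formula on `T⁻¹(A) ∩ U`, together with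
`φ(x) ≤ d φ(Tx) + φ(x) (max(0, 1 - d) + ∑ max(0, x_i f_i)/σ + ∑ f_i²/(2σ))`, gives
`P(A) ≤ γ(A) + γ(Uᶜ) + ∫_U (max(0, 1 - d) + ∑ max(0, x_i f_i)/σ + ∑ f_i²/(2σ)) dγ`
(`QuadBound.preimage_le`). The terms on the right are estimated as follows.

* The quadratic term is bounded through the fourth moment of a Gaussian
  (`QuadBound.lintegral_quad_le`).
* The drift term `max(0, x_i f_i)/σ` is integrated by parts along the `i`-th coordinate: its
  integral is at most that of `max(0, ∂_i f_i)`, plus a boundary term coming from the value of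
  `f_i` on the hyperplane `x_i = 0` (`slice_gauss`, `QuadBound.lintegral_drift_le`).
* Pointwise, `max(0, 1 - d) + ∑ max(0, ∂_i f_i)` is at most `mB‖x‖₁` if `m ≤ 2` and at most
  `2mB‖x‖₁` in general (`det_add_diag_le_small`, `det_add_diag_le`). The sharper bound is needed
  for small `m`; for `m ≥ 3` the claimed constant leaves enough room for the cruder one.
* Since `mB‖x‖₁ ≥ mBr` on `Uᶜ`, one has
  `γ(Uᶜ) + ∫_U mB‖x‖₁ dγ ≤ mB E‖X‖₁ + (1 - mBr) γ(Uᶜ)`, and `γ(Uᶜ)` is bounded by a Chernoff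
  argument (`tail_add_lintegral_le`, `tail_bound`).
-/

open Finset MeasureTheory ProbabilityTheory

/-- The Gaussian measure `N(μ, v·I_m)` on `ℝ^m` (each coordinate has variance `v`). -/
noncomputable def gaussPi (m : ℕ) (μ : Fin m → ℝ) (v : ℝ) : Measure (Fin m → ℝ) :=
  Measure.pi fun i => gaussianReal (μ i) v.toNNReal

/-- The convolution of two measures on `ℝ^m`. -/
noncomputable def conv (m : ℕ) (P Q : Measure (Fin m → ℝ)) : Measure (Fin m → ℝ) :=
  (P.prod Q).map fun p => p.1 + p.2

/-- Twice the total variation distance between two measures, i.e. the `L¹` distance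
between their densities when they exist. -/
noncomputable def l1Dist {E : Type*} [MeasurableSpace E] (P Q : Measure E) : ℝ :=
  2 * ⨆ A : {s : Set E // MeasurableSet s}, |(P A.1).toReal - (Q A.1).toReal|

/-- `P` is a `(σ, ε)`-blurring: there is a probability measure `P̂` with
`‖P − P̂ * N(0, σ I_m)‖₁ ≤ 2ε`. -/
def IsBlurring (m : ℕ) (σ ε : ℝ) (P : Measure (Fin m → ℝ)) : Prop :=
  ∃ Phat : Measure (Fin m → ℝ), IsProbabilityMeasure Phat ∧
    l1Dist P (conv m Phat (gaussPi m 0 σ)) ≤ 2 * ε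

/-! ### Determinants of perturbations of the identity -/

/-- Schur complement formula for the determinant, with pivot the top left entry. -/
lemma det_eq_pivot_mul {n : ℕ} (M : Matrix (Fin (n + 1)) (Fin (n + 1)) ℝ) (hp : M 0 0 ≠ 0) :
    M.det = M 0 0 * (Matrix.of fun i j : Fin n =>
      M i.succ j.succ - M i.succ 0 * M 0 j.succ / M 0 0).det := by
  have h := Matrix.det_eq_of_forall_row_eq_smul_add_const (A := M)
    (B := Matrix.of fun i j => M i j - (Fin.cases 0 (fun i => M i.succ 0 / M 0 0) i : ℝ) * M 0 j)
    (Fin.cases 0 (fun i => M i.succ 0 / M 0 0)) 0 (by simp) (by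
      intro i j
      simp)
  rw [h, Matrix.det_succ_column_zero, Fin.sum_univ_succ]
  have hz : ∀ i : Fin n, M i.succ 0 - M i.succ 0 / M 0 0 * M 0 0 = 0 := by
    intro i; field_simp; simp
  simp only [Matrix.of_apply, Fin.cases_succ, hz]
  simp only [Fin.val_zero, pow_zero, Fin.cases_zero, zero_mul, sub_zero, one_mul, mul_zero,
    Finset.sum_const_zero, add_zero]
  congr 2
  ext i j
  simp only [Matrix.submatrix_apply, Matrix.of_apply, Fin.succAbove_zero, Fin.cases_succ]
  ring

/-- By Gaussian elimination: the Schur complement of a perturbation of size `b` of the identity is a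
perturbation of size `b + b²/(1 - b) = b/(1 - b)`, and `(1 - b)(1 - n b/(1 - b)) = 1 - (n + 1) b`. -/
lemma one_sub_le_det_one_add : ∀ (m : ℕ) (A : Matrix (Fin m) (Fin m) ℝ) (b : ℝ), 0 ≤ b →
    m * b < 1 → (∀ i j, |A i j| ≤ b) → 1 - m * b ≤ (1 + A).det := by
  intro m
  induction m with
  | zero => intro A b _ _ _; simp
  | succ n ih =>
    intro A b hb hmb hA
    push_cast at hmb ⊢
    have hnb : 0 ≤ (n : ℝ) * b := by positivity
    have hb1 : 0 < 1 - b := by linarith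
    have hp : 1 - b ≤ (1 + A) 0 0 := by
      have := (abs_le.1 (hA 0 0)).1
      simp only [Matrix.add_apply, Matrix.one_apply_eq]; linarith
    have hp0 : 0 < (1 + A) 0 0 := by linarith
    rw [det_eq_pivot_mul _ hp0.ne']
    have key := ih (Matrix.of fun i j : Fin n =>
      A i.succ j.succ - A i.succ 0 * A 0 j.succ / (1 + A) 0 0) (b / (1 - b)) (by positivity)
      (by rw [← mul_div_assoc, div_lt_one hb1]; linarith) (by
        intro i j
        simp only [Matrix.of_apply]
        have h1 : |A i.succ 0 * A 0 j.succ / (1 + A) 0 0| ≤ b * b / (1 - b) := by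
          rw [abs_div, abs_mul, abs_of_pos hp0]
          have := hA i.succ 0
          have := hA 0 j.succ
          gcongr
        calc _ ≤ |A i.succ j.succ| + |A i.succ 0 * A 0 j.succ / (1 + A) 0 0| := abs_sub _ _
          _ ≤ b + b * b / (1 - b) := add_le_add (hA _ _) h1
          _ = b / (1 - b) := by field_simp; ring)
    have hM : (Matrix.of fun i j : Fin n =>
        (1 + A) i.succ j.succ - (1 + A) i.succ 0 * (1 + A) 0 j.succ / (1 + A) 0 0)
        = 1 + Matrix.of fun i j : Fin n =>
          A i.succ j.succ - A i.succ 0 * A 0 j.succ / (1 + A) 0 0 := by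
      ext i j
      simp [Matrix.one_apply, Fin.succ_ne_zero, (Fin.succ_ne_zero _).symm]
      ring
    rw [hM]
    have h0 : 0 ≤ 1 - n * (b / (1 - b)) := by
      rw [← mul_div_assoc, sub_nonneg, div_le_one hb1]; linarith
    calc 1 - ((n : ℝ) + 1) * b = (1 - b) * (1 - n * (b / (1 - b))) := by field_simp; ring
      _ ≤ _ := mul_le_mul hp key h0 hp0.le

/-- In dimension at most two the positive diagonal entries compensate the determinant loss, so that
the sum of both is no larger than the bound `m * b` for the determinant loss alone. -/
lemma det_add_diag_le_small {m : ℕ} (hm : m ≤ 2) (A : Matrix (Fin m) (Fin m) ℝ) (b : ℝ)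
    (hmb : m * b < 1) (hA : ∀ i j, |A i j| ≤ b) :
    max 0 (1 - (1 + A).det) + ∑ i, max 0 (A i i) ≤ m * b := by
  interval_cases m
  · simp
  · have h := abs_le.1 (hA 0 0)
    simp only [Matrix.det_fin_one, Fin.sum_univ_one, Matrix.add_apply, Matrix.one_apply_eq]
    rcases max_cases 0 (A 0 0) with ⟨e, _⟩ | ⟨e, _⟩ <;> rw [e] <;>
    rcases max_cases 0 (1 - (1 + A 0 0)) with ⟨e, _⟩ | ⟨e, _⟩ <;> rw [e] <;> norm_num <;> linarith
  · have h00 := abs_le.1 (hA 0 0)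
    have h11 := abs_le.1 (hA 1 1)
    have hb : 0 ≤ b := (abs_nonneg _).trans (hA 0 0)
    have hoff : A 0 1 * A 1 0 ≤ b * b := by
      refine (le_abs_self _).trans ?_
      rw [abs_mul]
      exact mul_le_mul (hA _ _) (hA _ _) (abs_nonneg _) hb
    simp only [Matrix.det_fin_two, Fin.sum_univ_two, Matrix.add_apply, Matrix.one_apply_eq]
    have e01 : (1 : Matrix (Fin 2) (Fin 2) ℝ) 0 1 = 0 := by simp
    have e10 : (1 : Matrix (Fin 2) (Fin 2) ℝ) 1 0 = 0 := by simp
    rw [e01, e10]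
    simp only [zero_add]
    push_cast at *
    generalize A 0 0 = x at *
    generalize A 1 1 = y at *
    generalize A 0 1 * A 1 0 = z at *
    rcases max_cases 0 x with ⟨e, hx⟩ | ⟨e, hx⟩ <;> rw [e] <;>
    rcases max_cases 0 y with ⟨e, hy⟩ | ⟨e, hy⟩ <;> rw [e] <;>
    rcases max_cases 0 (1 - ((1 + x) * (1 + y) - z)) with ⟨e, _⟩ | ⟨e, _⟩ <;> rw [e] <;>
    nlinarith [mul_nonneg (sub_nonneg.2 h00.2) (sub_nonneg.2 h11.2), mul_nonneg hb hb,
      mul_nonneg (by linarith : 0 ≤ b + x) (by linarith : 0 ≤ b + y),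
      mul_nonneg (by linarith : 0 ≤ b - x) (by linarith : 0 ≤ b + y),
      mul_nonneg (by linarith : 0 ≤ b + x) (by linarith : 0 ≤ b - y),
      mul_nonneg hb (by linarith : 0 ≤ 1 - 2 * b)]

lemma det_add_diag_le {m : ℕ} (A : Matrix (Fin m) (Fin m) ℝ) (b : ℝ) (hb : 0 ≤ b)
    (hmb : m * b < 1) (hA : ∀ i j, |A i j| ≤ b) :
    max 0 (1 - (1 + A).det) + ∑ i, max 0 (A i i) ≤ m * b + m * b := by
  have h1 := one_sub_le_det_one_add m A b hb hmb hA
  have h2 : ∑ i, max 0 (A i i) ≤ ∑ _i : Fin m, b :=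
    Finset.sum_le_sum fun i _ => max_le hb ((le_abs_self _).trans (hA i i))
  simp only [Finset.sum_const, Finset.card_univ, Fintype.card_fin, nsmul_eq_mul] at h2
  exact add_le_add (max_le (by positivity) (by linarith)) h2

/-! ### Gaussian integration by parts on the line -/

lemma hasDerivAt_gaussianPDF (σ : ℝ) (hσ : 0 < σ) (t : ℝ) :
    HasDerivAt (gaussianPDFReal 0 σ.toNNReal)
      (-(t / σ) * gaussianPDFReal 0 σ.toNNReal t) t := by
  have h : HasDerivAt (fun x : ℝ => -(x - 0) ^ 2 / (2 * (σ.toNNReal : ℝ))) (-(t / σ)) t := by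
    have := (((hasDerivAt_id t).sub_const 0).pow 2).neg.div_const (2 * (σ.toNNReal : ℝ))
    refine HasDerivAt.congr_deriv (f := fun x : ℝ => -(x - 0) ^ 2 / (2 * (σ.toNNReal : ℝ))) this ?_
    rw [Real.coe_toNNReal _ hσ.le]; simp; field_simp
  have h2 := h.exp.const_mul ((√(2 * Real.pi * (σ.toNNReal : ℝ)))⁻¹)
  unfold gaussianPDFReal
  exact h2.congr_deriv (by ring)

lemma continuous_gaussianPDF (σ : ℝ) : Continuous (gaussianPDFReal 0 σ.toNNReal) := by
  unfold gaussianPDFReal; fun_prop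

/-- Integration by parts against the Gaussian density on `[0, R]`, applied to the nondecreasing
majorant `t ↦ max 0 (g 0) + ∫₀ᵗ max 0 g'` of `g`. -/
lemma half_gauss (σ R : ℝ) (hσ : 0 < σ) (hR : 0 ≤ R) (g g' : ℝ → ℝ)
    (hg : ∀ t, HasDerivAt g (g' t) t) (hg' : Continuous g') :
    ∫ t in (0 : ℝ)..R, max 0 (t * g t) / σ * gaussianPDFReal 0 σ.toNNReal t ≤
      (∫ t in (0 : ℝ)..R, max 0 (g' t) * gaussianPDFReal 0 σ.toNNReal t) +
        max 0 (g 0) * gaussianPDFReal 0 σ.toNNReal 0 := by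
  set φ := gaussianPDFReal 0 σ.toNNReal with hφ
  have hφc : Continuous φ := continuous_gaussianPDF σ
  have hφ0 : ∀ t, 0 ≤ φ t := fun t => gaussianPDFReal_nonneg _ _ _
  have hgc : Continuous g := continuous_iff_continuousAt.2 fun t => (hg t).continuousAt
  set k : ℝ → ℝ := fun t => max 0 (g' t) with hk
  have hkc : Continuous k := by fun_prop
  -- `H` is nonnegative on `[0, ∞)`, dominates `g` there, and has derivative `max 0 g'`.
  set H : ℝ → ℝ := fun t => max 0 (g 0) + ∫ s in (0 : ℝ)..t, k s with hH
  have hHd : ∀ t, HasDerivAt H (k t) t := fun t =>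
    ((hkc.integral_hasStrictDerivAt 0 t).hasDerivAt).const_add _
  have hHc : Continuous H := continuous_iff_continuousAt.2 fun t => (hHd t).continuousAt
  have hH0 : ∀ t, 0 ≤ t → 0 ≤ H t := fun t ht =>
    add_nonneg (le_max_left _ _) (intervalIntegral.integral_nonneg ht fun _ _ => le_max_left _ _)
  have hgH : ∀ t, 0 ≤ t → g t ≤ H t := by
    intro t ht
    have h1 : ∫ s in (0 : ℝ)..t, g' s = g t - g 0 :=
      intervalIntegral.integral_eq_sub_of_hasDerivAt (fun x _ => hg x) (hg'.intervalIntegrable _ _)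
    have h2 : ∫ s in (0 : ℝ)..t, g' s ≤ ∫ s in (0 : ℝ)..t, k s :=
      intervalIntegral.integral_mono_on ht (hg'.intervalIntegrable _ _)
        (hkc.intervalIntegrable _ _) fun x _ => le_max_right _ _
    have := le_max_right 0 (g 0)
    simp only [hH]; linarith
  have hF : ∀ t, HasDerivAt (fun t => -(H t * φ t)) (t * H t / σ * φ t - k t * φ t) t := by
    intro t
    exact ((hHd t).mul (hasDerivAt_gaussianPDF σ hσ t)).neg.congr_deriv (by
      simp only [← hφ]; ring)
  have hInt : ∫ t in (0 : ℝ)..R, (t * H t / σ * φ t - k t * φ t) =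
      -(H R * φ R) - -(H 0 * φ 0) :=
    intervalIntegral.integral_eq_sub_of_hasDerivAt (fun x _ => hF x)
      (Continuous.intervalIntegrable (by fun_prop) _ _)
  rw [intervalIntegral.integral_sub (Continuous.intervalIntegrable (by fun_prop) _ _)
    (Continuous.intervalIntegrable (by fun_prop) _ _)] at hInt
  have hmono : ∫ t in (0 : ℝ)..R, max 0 (t * g t) / σ * φ t ≤ ∫ t in (0 : ℝ)..R, t * H t / σ * φ t := by
    refine intervalIntegral.integral_mono_on hR (Continuous.intervalIntegrable (by fun_prop) _ _)
      (Continuous.intervalIntegrable (by fun_prop) _ _) fun t ht => ?_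
    have := hφ0 t
    gcongr
    exact max_le (mul_nonneg ht.1 (hH0 t ht.1)) (mul_le_mul_of_nonneg_left (hgH t ht.1) ht.1)
  have hH00 : H 0 = max 0 (g 0) := by simp [hH]
  have := mul_nonneg (hH0 R hR) (hφ0 R)
  rw [hH00] at hInt
  linarith

/-- The two-sided version of `half_gauss`, by applying it also to `t ↦ -g (-t)`. -/
lemma full_gauss (σ R : ℝ) (hσ : 0 < σ) (hR : 0 ≤ R) (g g' : ℝ → ℝ)
    (hg : ∀ t, HasDerivAt g (g' t) t) (hg' : Continuous g') :
    ∫ t in (-R)..R, max 0 (t * g t) / σ * gaussianPDFReal 0 σ.toNNReal t ≤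
      (∫ t in (-R)..R, max 0 (g' t) * gaussianPDFReal 0 σ.toNNReal t) +
        |g 0| * gaussianPDFReal 0 σ.toNNReal 0 := by
  have h1 := half_gauss σ R hσ hR g g' hg hg'
  have h2 := half_gauss σ R hσ hR (fun t => -g (-t)) (fun t => g' (-t))
    (fun t => by
      exact ((hg (-t)).scomp t (hasDerivAt_neg t)).neg.congr_deriv (by simp)) (by fun_prop)
  have hφc : Continuous (gaussianPDFReal 0 σ.toNNReal) := continuous_gaussianPDF σ
  have hgc : Continuous g := continuous_iff_continuousAt.2 fun t => (hg t).continuousAt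
  have hev : ∀ t, gaussianPDFReal 0 σ.toNNReal (-t) = gaussianPDFReal 0 σ.toNNReal t := by
    intro t; simp [gaussianPDFReal]
  have e1 : ∫ t in (-R)..0, max 0 (t * g t) / σ * gaussianPDFReal 0 σ.toNNReal t =
      ∫ t in (0 : ℝ)..R, max 0 (t * -g (-t)) / σ * gaussianPDFReal 0 σ.toNNReal t := by
    have := intervalIntegral.integral_comp_neg (a := 0) (b := R)
      (fun t => max 0 (t * g t) / σ * gaussianPDFReal 0 σ.toNNReal t)
    rw [neg_zero] at this
    rw [← this]
    congr 1; ext t; rw [hev]; congr 3; ring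
  have e2 : ∫ t in (-R)..0, max 0 (g' t) * gaussianPDFReal 0 σ.toNNReal t =
      ∫ t in (0 : ℝ)..R, max 0 (g' (-t)) * gaussianPDFReal 0 σ.toNNReal t := by
    have := intervalIntegral.integral_comp_neg (a := 0) (b := R)
      (fun t => max 0 (g' t) * gaussianPDFReal 0 σ.toNNReal t)
    rw [neg_zero] at this
    rw [← this]
    congr 1; ext t; rw [hev]
  rw [← intervalIntegral.integral_add_adjacent_intervals (a := -R) (b := 0) (c := R)
      (Continuous.intervalIntegrable (by fun_prop) _ _)
      (Continuous.intervalIntegrable (by fun_prop) _ _),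
    ← intervalIntegral.integral_add_adjacent_intervals (a := -R) (b := 0) (c := R)
      (f := fun t => max 0 (g' t) * gaussianPDFReal 0 σ.toNNReal t)
      (Continuous.intervalIntegrable (by fun_prop) _ _)
      (Continuous.intervalIntegrable (by fun_prop) _ _), e1, e2]
  have habs : |g 0| = max 0 (g 0) + max 0 (-g 0) := by
    rcases le_total 0 (g 0) with h | h
    · rw [abs_of_nonneg h, max_eq_right h, max_eq_left (by linarith)]; ring
    · rw [abs_of_nonpos h, max_eq_left h, max_eq_right (by linarith)]; ring
  rw [habs, add_mul]
  simp only [neg_zero] at h2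
  linarith

lemma setLIntegral_gaussianReal (σ a b : ℝ) (hσ : 0 < σ) (hab : a ≤ b) (h : ℝ → ℝ)
    (hc : Continuous h) (h0 : ∀ t, 0 ≤ h t) :
    ∫⁻ t in Set.Ioo a b, ENNReal.ofReal (h t) ∂(gaussianReal 0 σ.toNNReal) =
      ENNReal.ofReal (∫ t in a..b, h t * gaussianPDFReal 0 σ.toNNReal t) := by
  have hφc : Continuous (gaussianPDFReal 0 σ.toNNReal) := continuous_gaussianPDF σ
  rw [gaussianReal_of_var_ne_zero _ (by simpa using hσ),
    setLIntegral_withDensity_eq_setLIntegral_mul _ (measurable_gaussianPDF _ _)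
      (by fun_prop) measurableSet_Ioo, intervalIntegral.integral_of_le hab,
    integral_Ioc_eq_integral_Ioo, ofReal_integral_eq_lintegral_ofReal]
  · refine lintegral_congr fun t => ?_
    simp only [Pi.mul_apply, gaussianPDF]
    rw [mul_comm, ENNReal.ofReal_mul (h0 t)]
  · exact ((Continuous.integrableOn_Icc (by fun_prop)).mono_set Set.Ioo_subset_Icc_self)
  · exact Filter.Eventually.of_forall fun t => mul_nonneg (h0 t) (gaussianPDFReal_nonneg _ _ _)

/-- The positive part of the drift `t g(t)/σ` is controlled by that of `g'`, up to a boundary term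
at `0`. -/
lemma slice_gauss (σ R : ℝ) (hσ : 0 < σ) (hR : 0 ≤ R) (g g' : ℝ → ℝ)
    (hg : ∀ t, HasDerivAt g (g' t) t) (hg' : Continuous g') :
    ∫⁻ t in Set.Ioo (-R) R, ENNReal.ofReal (max 0 (t * g t) / σ) ∂(gaussianReal 0 σ.toNNReal) ≤
      (∫⁻ t in Set.Ioo (-R) R, ENNReal.ofReal (max 0 (g' t)) ∂(gaussianReal 0 σ.toNNReal)) +
        ENNReal.ofReal (|g 0| * (√(2 * Real.pi * σ))⁻¹) := by
  have hgc : Continuous g := continuous_iff_continuousAt.2 fun t => (hg t).continuousAt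
  rw [setLIntegral_gaussianReal σ _ _ hσ (by linarith) _ (by fun_prop) (fun t => by positivity),
    setLIntegral_gaussianReal σ _ _ hσ (by linarith) _ (by fun_prop) (fun t => by positivity),
    ← ENNReal.ofReal_add _ (by positivity)]
  · refine ENNReal.ofReal_le_ofReal ?_
    have := full_gauss σ R hσ hR g g' hg hg'
    have e : gaussianPDFReal 0 σ.toNNReal 0 = (√(2 * Real.pi * σ))⁻¹ := by
      simp [gaussianPDFReal, hσ.le]
    rwa [e] at this
  · exact intervalIntegral.integral_nonneg (by linarith) fun t _ =>
      mul_nonneg (le_max_left _ _) (gaussianPDFReal_nonneg _ _ _)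

/-! ### Gaussian moments and an exponential moment of `|X|` -/

/-- The absolute moments of a centered Gaussian of variance `σ`. -/
lemma integral_abs_pow_gaussianReal (σ : ℝ) (hσ : 0 < σ) (k : ℕ) :
    ∫ x, |x| ^ k ∂(gaussianReal 0 σ.toNNReal) =
      (√(2 * Real.pi * σ))⁻¹ * ((1 / (2 * σ)) ^ (-((k : ℝ) + 1) / 2) *
        Real.Gamma (((k : ℝ) + 1) / 2)) := by
  rw [integral_gaussianReal_eq_integral_smul (by simpa using hσ)]
  have h := integral_rpow_mul_exp_neg_mul_rpow (p := 2) (q := k) (b := 1 / (2 * σ)) (by norm_num)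
    (by have : (0:ℝ) ≤ k := by positivity
        linarith) (by positivity)
  have e : ∀ x : ℝ, gaussianPDFReal 0 σ.toNNReal x • |x| ^ k =
      (fun y : ℝ => (√(2 * Real.pi * σ))⁻¹ * (y ^ (k : ℝ) * Real.exp (-(1 / (2 * σ)) * y ^ (2 : ℝ)))) |x| := by
    intro x
    simp only [gaussianPDFReal, Real.coe_toNNReal _ hσ.le, smul_eq_mul, sub_zero, Real.rpow_natCast,
      Real.rpow_two, sq_abs]
    rw [show -x ^ 2 / (2 * σ) = -(1 / (2 * σ)) * x ^ 2 by ring]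
    ring
  rw [integral_congr_ae (Filter.Eventually.of_forall e),
    integral_comp_abs (f := fun y : ℝ => (√(2 * Real.pi * σ))⁻¹ *
      (y ^ (k : ℝ) * Real.exp (-(1 / (2 * σ)) * y ^ (2 : ℝ)))), integral_const_mul, h]
  ring

lemma integral_abs_gaussianReal (σ : ℝ) (hσ : 0 < σ) :
    ∫ x, |x| ∂(gaussianReal 0 σ.toNNReal) = √(2 * σ / Real.pi) := by
  have h := integral_abs_pow_gaussianReal σ hσ 1
  simp only [pow_one, Nat.cast_one] at h
  rw [h]
  norm_num [Real.rpow_neg_one]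
  rw [Real.sqrt_mul (by positivity), Real.sqrt_mul (by positivity), Real.sqrt_div (by positivity), Real.sqrt_mul (by positivity)]
  have := Real.sq_sqrt hσ.le
  have h2 := Real.sq_sqrt (zero_le_two (α := ℝ))
  have : √σ ≠ 0 := by positivity
  have : √Real.pi ≠ 0 := by positivity
  field_simp
  nlinarith

lemma integral_sq_gaussianReal (σ : ℝ) (hσ : 0 < σ) :
    ∫ x, x ^ 2 ∂(gaussianReal 0 σ.toNNReal) = σ := by
  have h := variance_fun_id_gaussianReal (μ := 0) (v := σ.toNNReal)
  rw [variance_eq_integral (by fun_prop)] at h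
  simpa [hσ.le] using h

lemma integral_pow_four_gaussianReal (σ : ℝ) (hσ : 0 < σ) :
    ∫ x, x ^ 4 ∂(gaussianReal 0 σ.toNNReal) = 3 * σ ^ 2 := by
  have h := integral_abs_pow_gaussianReal σ hσ 4
  simp only [Even.pow_abs (show Even 4 by decide)] at h
  rw [h]
  have h0 := integral_abs_pow_gaussianReal σ hσ 0
  have hg : Real.Gamma (5 / 2) = 3 / 4 * Real.Gamma (1 / 2) := by
    rw [show (5 / 2 : ℝ) = (1 / 2 + 1) + 1 by norm_num, Real.Gamma_add_one (by norm_num),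
      Real.Gamma_add_one (by norm_num)]
    ring
  have hp : (1 / (2 * σ)) ^ (-5 / 2 : ℝ) = (2 * σ) ^ 2 * (1 / (2 * σ)) ^ (-1 / 2 : ℝ) := by
    rw [show (-5 / 2 : ℝ) = -1 / 2 + (-2 : ℝ) by norm_num, Real.rpow_add (by positivity),
      Real.rpow_neg (by positivity) 2, Real.rpow_two]
    field_simp
  simp only [pow_zero, Nat.cast_zero, zero_add, integral_const, probReal_univ, smul_eq_mul,
    mul_one] at h0
  rw [show (((4 : ℕ) : ℝ) + 1) = 5 by norm_num, hp, hg]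
  linear_combination (-3 * σ ^ 2) * h0

/-- Exponential moment of `|X|`. Since `E e^{l|X|} + E e^{-l|X|} = 2 e^{σ l²/2}`, the product of the
two expectations is at most `e^{σ l²}`, and `E e^{-l|X|} ≥ e^{-l E|X|}` by Jensen's inequality. -/
lemma integral_exp_abs_le (σ : ℝ) (hσ : 0 < σ) (l : ℝ) (hl : 0 ≤ l) :
    Integrable (fun x => Real.exp (l * |x|)) (gaussianReal 0 σ.toNNReal) ∧
    ∫ x, Real.exp (l * |x|) ∂(gaussianReal 0 σ.toNNReal) ≤
      Real.exp (l * √(2 * σ / Real.pi) + l ^ 2 * σ) := by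
  set γ := gaussianReal 0 σ.toNNReal with hγ
  have i1 : Integrable (fun x => Real.exp (l * x)) γ := integrable_exp_mul_gaussianReal l
  have i2 : Integrable (fun x => Real.exp (-l * x)) γ := integrable_exp_mul_gaussianReal (-l)
  have i3 : Integrable (fun x => Real.exp (l * |x|)) γ := by
    refine (i1.add i2).mono' (by fun_prop) (Filter.Eventually.of_forall fun x => ?_)
    rw [Real.norm_of_nonneg (Real.exp_pos _).le]
    simp only [Pi.add_apply]
    rcases abs_cases x with ⟨h, _⟩ | ⟨h, _⟩ <;> rw [h]
    · linarith [Real.exp_pos (-l * x)]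
    · rw [show l * -x = -l * x by ring]; linarith [Real.exp_pos (l * x)]
  have i4 : Integrable (fun x => Real.exp (-l * |x|)) γ := by
    refine i3.mono' (by fun_prop) (Filter.Eventually.of_forall fun x => ?_)
    rw [Real.norm_of_nonneg (Real.exp_pos _).le]
    apply Real.exp_le_exp.2
    nlinarith [abs_nonneg x]
  refine ⟨i3, ?_⟩
  have hm : ∀ s : ℝ, ∫ x, Real.exp (s * x) ∂γ = Real.exp (σ * s ^ 2 / 2) := by
    intro s
    have := congrFun (mgf_id_gaussianReal (μ := 0) (v := σ.toNNReal)) s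
    simpa [mgf, hσ.le] using this
  set E1 := ∫ x, Real.exp (l * |x|) ∂γ
  set E2 := ∫ x, Real.exp (-l * |x|) ∂γ
  have hsum : E1 + E2 = 2 * Real.exp (σ * l ^ 2 / 2) := by
    have h1 : E1 + E2 = ∫ x, (Real.exp (l * x) + Real.exp (-l * x)) ∂γ := by
      rw [← integral_add i3 i4]
      refine integral_congr_ae (Filter.Eventually.of_forall fun x => ?_)
      simp only
      rcases abs_cases x with ⟨h, _⟩ | ⟨h, _⟩ <;> rw [h]
      rw [show l * -x = -l * x by ring, show -l * -x = l * x by ring, add_comm]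
    rw [h1, integral_add i1 i2, hm, hm, neg_sq]; ring
  have hprod : E1 * E2 ≤ Real.exp (l ^ 2 * σ) := by
    have : Real.exp (l ^ 2 * σ) = Real.exp (σ * l ^ 2 / 2) ^ 2 := by
      rw [← Real.exp_nat_mul]; congr 1; push_cast; ring
    rw [this, show Real.exp (σ * l ^ 2 / 2) = (E1 + E2) / 2 by linarith]
    nlinarith [sq_nonneg (E1 - E2)]
  have hjen : Real.exp (-l * √(2 * σ / Real.pi)) ≤ E2 := by
    set μ := √(2 * σ / Real.pi) with hμ
    have iabs : Integrable (fun x : ℝ => |x|) γ := by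
      have : Integrable (fun x : ℝ => x) γ :=
        (memLp_id_gaussianReal 1).integrable le_rfl
      exact this.abs
    have hE : ∫ x, Real.exp (-l * μ) * (1 - l * (|x| - μ)) ∂γ = Real.exp (-l * μ) := by
      have isub : Integrable (fun x : ℝ => l * (|x| - μ)) γ :=
        (iabs.sub (integrable_const _)).const_mul _
      rw [integral_const_mul, integral_sub (integrable_const _) isub, integral_const_mul, integral_sub iabs (integrable_const _), integral_abs_gaussianReal σ hσ]
      simp [← hμ]
    rw [← hE]
    refine integral_mono ?_ i4 fun x => ?_
    · exact ((integrable_const _).sub ((iabs.sub (integrable_const _)).const_mul _)).const_mul _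
    · have := Real.add_one_le_exp (-l * (|x| - μ))
      calc Real.exp (-l * μ) * (1 - l * (|x| - μ)) ≤ Real.exp (-l * μ) * Real.exp (-l * (|x| - μ)) := by
            gcongr; linarith
        _ = _ := by rw [← Real.exp_add]; congr 1; ring
  have hE1 : 0 ≤ E1 := integral_nonneg fun x => (Real.exp_pos _).le
  have h5 : E1 * Real.exp (-l * √(2 * σ / Real.pi)) ≤ Real.exp (l ^ 2 * σ) :=
    (mul_le_mul_of_nonneg_left hjen hE1).trans hprod
  rw [Real.exp_add]
  rw [neg_mul, Real.exp_neg, ← div_eq_mul_inv, div_le_iff₀ (Real.exp_pos _)] at h5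
  linarith

/-! ### The Gaussian measure on `ℝ^m` -/

instance gaussPi_isProb (m : ℕ) (μ : Fin m → ℝ) (v : ℝ) : IsProbabilityMeasure (gaussPi m μ v) := by
  unfold gaussPi; infer_instance

/-- The Lebesgue density of `N(0, σ I_m)`, as a product of one-dimensional densities. -/
noncomputable def gdens (m : ℕ) (σ : ℝ) (x : Fin m → ℝ) : ℝ :=
  ∏ i, gaussianPDFReal 0 σ.toNNReal (x i)

lemma gdens_nonneg (m : ℕ) (σ : ℝ) (x : Fin m → ℝ) : 0 ≤ gdens m σ x :=
  Finset.prod_nonneg fun _ _ => gaussianPDFReal_nonneg _ _ _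

lemma measurable_gdens (m : ℕ) (σ : ℝ) : Measurable (gdens m σ) := by
  unfold gdens; fun_prop

lemma gaussPi_eq_withDensity (m : ℕ) (σ : ℝ) (hσ : 0 < σ) :
    gaussPi m 0 σ = volume.withDensity fun x => ENNReal.ofReal (gdens m σ x) := by
  unfold gaussPi
  refine Measure.pi_eq fun s hs => ?_
  rw [withDensity_apply _ (MeasurableSet.univ_pi hs), ← lintegral_indicator (MeasurableSet.univ_pi hs)]
  have hInt : ∀ i, Integrable ((s i).indicator (gaussianPDFReal 0 σ.toNNReal)) volume := fun i =>
    (integrable_gaussianPDFReal 0 _).indicator (hs i)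
  have hnn : ∀ i t, 0 ≤ (s i).indicator (gaussianPDFReal 0 σ.toNNReal) t := fun i t =>
    Set.indicator_nonneg (fun _ _ => gaussianPDFReal_nonneg _ _ _) _
  have e : ∀ x : Fin m → ℝ, (Set.univ.pi s).indicator (fun x => ENNReal.ofReal (gdens m σ x)) x =
      ENNReal.ofReal (∏ i, (s i).indicator (gaussianPDFReal 0 σ.toNNReal) (x i)) := by
    intro x
    by_cases hx : x ∈ Set.univ.pi s
    · rw [Set.indicator_of_mem hx]
      congr 1
      exact Finset.prod_congr rfl fun i _ => (Set.indicator_of_mem (hx i trivial) _).symm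
    · rw [Set.indicator_of_notMem hx]
      simp only [Set.mem_univ_pi, not_forall] at hx
      obtain ⟨i, hi⟩ := hx
      rw [Finset.prod_eq_zero (Finset.mem_univ i) (Set.indicator_of_notMem hi _), ENNReal.ofReal_zero]
  rw [lintegral_congr e, volume_pi, ← ofReal_integral_eq_lintegral_ofReal
    (Integrable.fintype_prod (f := fun i => (s i).indicator (gaussianPDFReal 0 σ.toNNReal)) hInt)
    (Filter.Eventually.of_forall fun x => Finset.prod_nonneg fun i _ => hnn i _),
    integral_fintype_prod_eq_prod
      (fun i => (s i).indicator (gaussianPDFReal 0 σ.toNNReal)),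
    ENNReal.ofReal_prod_of_nonneg fun i _ => integral_nonneg (hnn i)]
  refine Finset.prod_congr rfl fun i _ => ?_
  rw [integral_indicator (hs i), Pi.zero_apply,
    gaussianReal_apply_eq_integral 0 (by simpa using hσ)]

lemma lintegral_gaussPi_eval (m : ℕ) (σ : ℝ) (i : Fin m) (h : ℝ → ℝ)
    (hi : Integrable h (gaussianReal 0 σ.toNNReal)) (hm : Measurable h) (h0 : ∀ t, 0 ≤ h t) :
    ∫⁻ x, ENNReal.ofReal (h (x i)) ∂(gaussPi m 0 σ) =
      ENNReal.ofReal (∫ t, h t ∂(gaussianReal 0 σ.toNNReal)) := by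
  rw [ofReal_integral_eq_lintegral_ofReal hi (Filter.Eventually.of_forall h0)]
  exact (measurePreserving_eval (fun _ : Fin m => gaussianReal 0 σ.toNNReal) i).lintegral_comp
    (f := fun t => ENNReal.ofReal (h t)) (by fun_prop)

lemma integrable_pow_gaussianReal (v : NNReal) (k : ℕ) :
    Integrable (fun x : ℝ => |x| ^ k) (gaussianReal 0 v) := by
  rcases Nat.eq_zero_or_pos k with rfl | hk
  · simp
  · have := (memLp_id_gaussianReal (μ := 0) (v := v) k).integrable_norm_pow (by omega)
    simpa using this

lemma lintegral_sum_eval (m : ℕ) (σ : ℝ) (s : Finset (Fin m)) (h : ℝ → ℝ)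
    (hi : Integrable h (gaussianReal 0 σ.toNNReal)) (hm : Measurable h) (h0 : ∀ t, 0 ≤ h t) :
    ∫⁻ x, ENNReal.ofReal (∑ i ∈ s, h (x i)) ∂(gaussPi m 0 σ) =
      ENNReal.ofReal (#s * ∫ t, h t ∂(gaussianReal 0 σ.toNNReal)) := by
  simp_rw [ENNReal.ofReal_sum_of_nonneg (fun i _ => h0 _)]
  rw [lintegral_finsetSum _ (fun i _ => by fun_prop)]
  simp_rw [lintegral_gaussPi_eval m σ _ h hi hm h0]
  rw [Finset.sum_const, nsmul_eq_mul, ENNReal.ofReal_mul (by positivity), ENNReal.ofReal_natCast]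

lemma lintegral_l1 (m : ℕ) (σ : ℝ) (hσ : 0 < σ) :
    ∫⁻ x, ENNReal.ofReal (∑ i, |x i|) ∂(gaussPi m 0 σ) =
      ENNReal.ofReal (m * √(2 * σ / Real.pi)) := by
  rw [lintegral_sum_eval m σ univ (fun t => |t|) (by simpa using integrable_pow_gaussianReal _ 1)
    (by fun_prop) (fun t => abs_nonneg t), integral_abs_gaussianReal σ hσ]
  simp

lemma lintegral_sq (m : ℕ) (σ : ℝ) (hσ : 0 < σ) (s : Finset (Fin m)) :
    ∫⁻ x, ENNReal.ofReal (∑ i ∈ s, x i ^ 2) ∂(gaussPi m 0 σ) = ENNReal.ofReal (#s * σ) := by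
  rw [lintegral_sum_eval m σ s (fun t => t ^ 2) (by simpa using integrable_pow_gaussianReal _ 2)
    (by fun_prop) (fun t => by positivity), integral_sq_gaussianReal σ hσ]

lemma lintegral_pow_four (m : ℕ) (σ : ℝ) (hσ : 0 < σ) :
    ∫⁻ x, ENNReal.ofReal (∑ i, x i ^ 4) ∂(gaussPi m 0 σ) = ENNReal.ofReal (m * (3 * σ ^ 2)) := by
  rw [lintegral_sum_eval m σ univ (fun t => t ^ 4)
    (by simpa [Even.pow_abs (show Even 4 by decide)] using
      integrable_pow_gaussianReal σ.toNNReal 4)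
    (by fun_prop) (fun t => by positivity), integral_pow_four_gaussianReal σ hσ]
  simp

/-- Chernoff bound for `‖X‖₁`, with the exponent `l = (r - m E|X₁|) / (2mσ)` that optimizes the
estimate of `integral_exp_abs_le`. -/
lemma tail_bound (m : ℕ) (hm : 0 < m) (σ r : ℝ) (hσ : 0 < σ)
    (hr : m * √(2 * σ / Real.pi) < r) :
    (gaussPi m 0 σ).real {x | r ≤ ∑ k, |x k|} ≤
      Real.exp (-(r / (2 * √σ) - m / √(2 * Real.pi)) ^ 2 / m) := by
  set μ := √(2 * σ / Real.pi) with hμ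
  have hm0 : (0 : ℝ) < m := by exact_mod_cast hm
  set l := (r - m * μ) / (2 * m * σ) with hl
  have hl0 : 0 ≤ l := div_nonneg (by linarith) (by positivity)
  obtain ⟨hi, hle⟩ := integral_exp_abs_le σ hσ l hl0
  have eprod : ∀ x : Fin m → ℝ, Real.exp (l * ∑ k, |x k|) = ∏ k, Real.exp (l * |x k|) := by
    intro x; rw [Finset.mul_sum, Real.exp_sum]
  have hInt : Integrable (fun x : Fin m → ℝ => Real.exp (l * ∑ k, |x k|)) (gaussPi m 0 σ) := by
    simp_rw [eprod]
    exact Integrable.fintype_prod (f := fun _ t => Real.exp (l * |t|)) (fun _ => hi)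
  have hmgf : mgf (fun x : Fin m → ℝ => ∑ k, |x k|) (gaussPi m 0 σ) l ≤
      Real.exp (l * μ + l ^ 2 * σ) ^ m := by
    unfold mgf
    simp_rw [eprod]
    unfold gaussPi
    rw [integral_fintype_prod_eq_prod (μ := fun i : Fin m => gaussianReal ((0 : Fin m → ℝ) i) σ.toNNReal)
      (fun _ t => Real.exp (l * |t|))]
    simp only [Pi.zero_apply, Finset.prod_const, Finset.card_univ, Fintype.card_fin]
    exact pow_le_pow_left₀ (integral_nonneg fun _ => (Real.exp_pos _).le) hle m
  refine (measure_ge_le_exp_mul_mgf r hl0 hInt).trans ?_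
  refine (mul_le_mul_of_nonneg_left hmgf (Real.exp_pos _).le).trans ?_
  rw [← Real.exp_nat_mul, ← Real.exp_add]
  apply le_of_eq
  congr 1
  have h1 : r / (2 * √σ) - m / √(2 * Real.pi) = (r - m * μ) / (2 * √σ) := by
    rw [hμ, Real.sqrt_div (by positivity), Real.sqrt_mul (by positivity), Real.sqrt_mul (by positivity)]
    have : √σ ≠ 0 := by positivity
    have : √Real.pi ≠ 0 := by positivity
    have h2 := Real.sq_sqrt (zero_le_two (α := ℝ))
    field_simp
    linear_combination (√σ * m) * h2
  have h3 : ((r - m * μ) / (2 * √σ)) ^ 2 = (r - m * μ) ^ 2 / (4 * σ) := by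
    rw [div_pow, mul_pow, Real.sq_sqrt hσ.le]; norm_num
  rw [h1, h3, hl]
  field_simp
  ring

/-! ### Taylor bounds for `f` and injectivity of `x + f x` -/

lemma fderiv_eq_sum {m : ℕ} (h : (Fin m → ℝ) → ℝ) (x v : Fin m → ℝ) :
    fderiv ℝ h x v = ∑ j, v j * fderiv ℝ h x (Pi.single j 1) := by
  refine ((fderiv ℝ h x).toLinearMap.pi_apply_eq_sum_univ v).trans ?_
  refine Finset.sum_congr rfl fun j _ => ?_
  have e : (fun i => if j = i then (1 : ℝ) else 0) = Pi.single j 1 := by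
    ext i; simp [Pi.single_apply, eq_comm]
  rw [e, smul_eq_mul, ContinuousLinearMap.coe_coe]

lemma hasDerivAt_segment {m : ℕ} (h : (Fin m → ℝ) → ℝ) (hd : Differentiable ℝ h)
    (x v : Fin m → ℝ) (t : ℝ) :
    HasDerivAt (fun t : ℝ => h (x + t • v))
      (∑ j, v j * fderiv ℝ h (x + t • v) (Pi.single j 1)) t := by
  rw [← fderiv_eq_sum]
  have h1 : HasDerivAt (fun t : ℝ => x + t • v) v t := by
    simpa using ((hasDerivAt_id t).smul_const v).const_add x
  exact (hd _).hasFDerivAt.comp_hasDerivAt t h1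

lemma abs_sum_mul_le {m : ℕ} (v w : Fin m → ℝ) (C : ℝ) (hw : ∀ j, |w j| ≤ C) :
    |∑ j, v j * w j| ≤ C * ∑ j, |v j| := by
  refine (Finset.abs_sum_le_sum_abs _ _).trans ?_
  rw [Finset.mul_sum]
  refine Finset.sum_le_sum fun j _ => ?_
  rw [abs_mul, mul_comm]
  exact mul_le_mul_of_nonneg_right (hw j) (abs_nonneg _)

/-- Mean value inequality in the `ℓ¹` norm along the segment from `x` to `y`. -/
lemma abs_sub_le_l1 {m : ℕ} (h : (Fin m → ℝ) → ℝ) (hd : Differentiable ℝ h)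
    (x y : Fin m → ℝ) (C : ℝ)
    (hC : ∀ t ∈ Set.Icc (0 : ℝ) 1, ∀ j, |fderiv ℝ h (x + t • (y - x)) (Pi.single j 1)| ≤ C) :
    |h y - h x| ≤ C * ∑ j, |y j - x j| := by
  have := norm_image_sub_le_of_norm_deriv_le_segment_01'
    (f := fun t : ℝ => h (x + t • (y - x)))
    (f' := fun t => ∑ j, (y - x) j * fderiv ℝ h (x + t • (y - x)) (Pi.single j 1))
    (C := C * ∑ j, |y j - x j|)
    (fun t _ => (hasDerivAt_segment h hd x (y - x) t).hasDerivWithinAt)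
    (fun t ht => by
      rw [Real.norm_eq_abs]
      exact abs_sum_mul_le (y - x) _ C (hC t ⟨ht.1, ht.2.le⟩))
  simpa using this

lemma l1_smul {m : ℕ} (t : ℝ) (x : Fin m → ℝ) : ∑ k, |(t • x) k| = |t| * ∑ k, |x k| := by
  simp [abs_mul, Finset.mul_sum]

/-- `f` is `C²`, vanishes to first order at `0`, and its second partial derivatives are bounded
by `B` on the open `ℓ¹` ball of radius `r`. -/
structure QuadBound (m : ℕ) (B r : ℝ) (f : (Fin m → ℝ) → Fin m → ℝ) : Prop where
  contDiff : ContDiff ℝ 2 f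
  zero : f 0 = 0
  deriv_zero : ∀ i j : Fin m, fderiv ℝ (fun x => f x i) 0 (Pi.single j 1) = 0
  second : ∀ (i j j' : Fin m) (x : Fin m → ℝ), (∑ k, |x k|) < r →
      |fderiv ℝ (fun y => fderiv ℝ (fun w => f w i) y (Pi.single j 1)) x (Pi.single j' 1)| ≤ B

namespace QuadBound
variable {m : ℕ} {B r : ℝ} {f : (Fin m → ℝ) → Fin m → ℝ}

lemma contDiff_comp (H : QuadBound m B r f) (i : Fin m) : ContDiff ℝ 2 fun x => f x i :=
  contDiff_pi.1 H.contDiff i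

lemma contDiff_partial (H : QuadBound m B r f) (i j : Fin m) :
    ContDiff ℝ 1 fun x => fderiv ℝ (fun w => f w i) x (Pi.single j 1) :=
  ((H.contDiff_comp i).fderiv_right (m := 1) (by norm_num)).clm_apply contDiff_const

/-- The first derivatives of `f` vanish at `0`, hence grow at most linearly. -/
lemma abs_partial_le (H : QuadBound m B r f) (i j : Fin m) (x : Fin m → ℝ) (hx : ∑ k, |x k| < r) :
    |fderiv ℝ (fun w => f w i) x (Pi.single j 1)| ≤ B * ∑ k, |x k| := by
  have := abs_sub_le_l1 (fun x => fderiv ℝ (fun w => f w i) x (Pi.single j 1))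
    ((H.contDiff_partial i j).differentiable (by norm_num)) 0 x B (by
      intro t ht j'
      refine H.second i j j' _ ?_
      rw [zero_add, sub_zero, l1_smul, abs_of_nonneg ht.1]
      exact lt_of_le_of_lt (mul_le_of_le_one_left (by positivity) ht.2) hx)
  simpa [H.deriv_zero] using this

lemma abs_le (H : QuadBound m B r f) (i : Fin m) (x : Fin m → ℝ) (hx : ∑ k, |x k| < r) :
    |f x i| ≤ B / 2 * (∑ k, |x k|) ^ 2 := by
  set n := ∑ k, |x k| with hn
  have hd := (H.contDiff_comp i).differentiable (by norm_num)
  have h := image_norm_le_of_norm_deriv_right_le_deriv_boundary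
    (f := fun t : ℝ => f (0 + t • x) i) (a := 0) (b := 1)
    (f' := fun t => ∑ j, x j * fderiv ℝ (fun w => f w i) (0 + t • x) (Pi.single j 1))
    (B := fun t => B / 2 * n ^ 2 * t ^ 2) (B' := fun t => B / 2 * n ^ 2 * (2 * t))
    (fun t _ => (hasDerivAt_segment _ hd 0 x t).continuousAt.continuousWithinAt)
    (fun t _ => (hasDerivAt_segment _ hd 0 x t).hasDerivWithinAt)
    (by simp [H.zero])
    (fun t => by simpa using (hasDerivAt_pow 2 t).const_mul (B / 2 * n ^ 2))
    (fun t ht => by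
      rw [Real.norm_eq_abs]
      have := abs_sum_mul_le x (fun j => fderiv ℝ (fun w => f w i) (0 + t • x) (Pi.single j 1))
        (B * (t * n)) (fun j => by
          have hn' : ∑ k, |(0 + t • x) k| = t * n := by
            rw [zero_add, l1_smul, abs_of_nonneg ht.1]
          have := H.abs_partial_le i j (0 + t • x) (by
            rw [hn']
            exact lt_of_le_of_lt (mul_le_of_le_one_left (by positivity) ht.2.le) hx)
          rwa [hn'] at this)
      refine this.trans (le_of_eq ?_)
      rw [← hn]; ring)
  simpa using h (Set.right_mem_Icc.2 zero_le_one)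

/-- On the open `ℓ¹` ball, `f` strictly decreases `ℓ¹` distances of distinct points, as `m * B * r ≤ 1`. -/
lemma injOn (H : QuadBound m B r f) (hB : 0 < B) (hm : 0 < m) (hr2 : m * B * r ≤ 1) :
    Set.InjOn (fun x => x + f x) {x | ∑ k, |x k| < r} := by
  intro x hx y hy hxy
  simp only [Set.mem_ofPred_eq] at hx hy
  set n := max (∑ k, |x k|) (∑ k, |y k|) with hn
  have hnr : n < r := max_lt hx hy
  have hmain : ∀ i, |f y i - f x i| ≤ B * n * ∑ j, |y j - x j| := by
    intro i
    refine abs_sub_le_l1 (fun x => f x i) ((H.contDiff_comp i).differentiable (by norm_num)) x y _ ?_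
    intro t ht j
    have hz : ∑ k, |(x + t • (y - x)) k| ≤ n := by
      calc ∑ k, |(x + t • (y - x)) k| ≤ ∑ k, ((1 - t) * |x k| + t * |y k|) := by
            refine Finset.sum_le_sum fun k _ => ?_
            have : (x + t • (y - x)) k = (1 - t) * x k + t * y k := by simp; ring
            rw [this]
            refine (abs_add_le _ _).trans ?_
            rw [abs_mul, abs_mul, abs_of_nonneg ht.1, abs_of_nonneg (sub_nonneg.2 ht.2)]
        _ = (1 - t) * ∑ k, |x k| + t * ∑ k, |y k| := by
            rw [Finset.sum_add_distrib, Finset.mul_sum, Finset.mul_sum]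
        _ ≤ (1 - t) * n + t * n := by
            have := sub_nonneg.2 ht.2
            have := ht.1
            gcongr
            · exact le_max_left _ _
            · exact le_max_right _ _
        _ = n := by ring
    exact (H.abs_partial_le i j _ (hz.trans_lt hnr)).trans (by gcongr)
  have hfx : ∀ i, |f y i - f x i| = |y i - x i| := by
    intro i
    have := congrFun hxy i
    simp only [Pi.add_apply] at this
    rw [show f y i - f x i = -(y i - x i) by linarith, abs_neg]
  have hsum : ∑ i, |y i - x i| ≤ m * (B * n * ∑ j, |y j - x j|) := by
    calc ∑ i, |y i - x i| ≤ ∑ _i : Fin m, (B * n * ∑ j, |y j - x j|) :=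
          Finset.sum_le_sum fun i _ => (hfx i) ▸ hmain i
      _ = _ := by simp
  have hlt : m * B * n < 1 := by
    have : (0 : ℝ) < m := by exact_mod_cast hm
    exact lt_of_lt_of_le (mul_lt_mul_of_pos_left hnr (by positivity)) hr2
  have h0 : ∑ i, |y i - x i| = 0 := by
    have : 0 ≤ ∑ i, |y i - x i| := by positivity
    nlinarith
  rw [Finset.sum_eq_zero_iff_of_nonneg (fun _ _ => abs_nonneg _)] at h0
  ext i
  have := abs_eq_zero.1 (h0 i (Finset.mem_univ i))
  linarith

/-- The Jacobian matrix of `f` at `x`: the entry `(i, j)` is `∂f_i/∂x_j`. -/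
noncomputable def jac (f : (Fin m → ℝ) → Fin m → ℝ) (x : Fin m → ℝ) : Matrix (Fin m) (Fin m) ℝ :=
  Matrix.of fun i j => fderiv ℝ (fun w => f w i) x (Pi.single j 1)

lemma continuous_jac (H : QuadBound m B r f) : Continuous (jac f) :=
  continuous_matrix fun i j => (H.contDiff_partial i j).continuous

lemma hasFDerivAt (H : QuadBound m B r f) (x : Fin m → ℝ) :
    HasFDerivAt (fun x => x + f x) (Matrix.toLin' (1 + jac f x)).toContinuousLinearMap x := by
  have hd := (H.contDiff.differentiable (by norm_num) x).hasFDerivAt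
  have h := (hasFDerivAt_id x).add hd
  refine h.congr_fderiv ?_
  ext v i
  have h2 : fderiv ℝ (fun w => f w i) x v = fderiv ℝ f x v i := by
    rw [((hasFDerivAt_pi'.1 hd) i).fderiv]; simp
  have h3 := fderiv_eq_sum (fun w => f w i) x v
  simp [Matrix.mulVec, dotProduct, jac]
  rw [← h2, h3]
  exact Finset.sum_congr rfl fun j _ => mul_comm _ _

lemma det_fderiv (x : Fin m → ℝ) :
    ((Matrix.toLin' (1 + jac f x)).toContinuousLinearMap).det = (1 + jac f x).det := by
  exact LinearMap.det_toLin' _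

end QuadBound

/-! ### Change of variables -/

lemma gdens_add {m : ℕ} (σ : ℝ) (hσ : 0 < σ) (x y : Fin m → ℝ) :
    gdens m σ (x + y) = gdens m σ x * Real.exp (-∑ i, (x i * y i / σ + y i ^ 2 / (2 * σ))) := by
  unfold gdens
  rw [← Finset.sum_neg_distrib, Real.exp_sum, ← Finset.prod_mul_distrib]
  refine Finset.prod_congr rfl fun i _ => ?_
  simp only [gaussianPDFReal, Real.coe_toNNReal _ hσ.le, Pi.add_apply, sub_zero]
  rw [mul_assoc (√(2 * Real.pi * σ))⁻¹, ← Real.exp_add]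
  congr 2
  field_simp
  ring

/-- Here `d` is the Jacobian determinant and `exp (-a)` the ratio of the Gaussian densities at `x + f x`
and `x`. -/
lemma one_le_mul_exp_add (d a a' : ℝ) (hd : 0 ≤ d) (ha : a ≤ a') (ha' : 0 ≤ a') :
    1 ≤ d * Real.exp (-a) + (max 0 (1 - d) + a') := by
  have h1 := Real.add_one_le_exp (-a)
  rcases le_total 1 d with h | h
  · have := le_max_left 0 (1 - d)
    nlinarith [Real.exp_pos (-a)]
  · have := le_max_right 0 (1 - d)
    nlinarith [Real.exp_pos (-a)]

/-- A pointwise bound for the relative loss of density under `x ↦ x + f x`: the determinant loss,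
the positive part of the drift `⟪x, f x⟫ / σ` taken coordinate by coordinate, and the quadratic
term `‖f x‖₂² / (2σ)`. -/
noncomputable def defect {m : ℕ} (σ : ℝ) (f : (Fin m → ℝ) → Fin m → ℝ) (x : Fin m → ℝ) : ℝ :=
  max 0 (1 - (1 + QuadBound.jac f x).det) +
    (∑ i, max 0 (x i * f x i) / σ + ∑ i, f x i ^ 2 / (2 * σ))

lemma defect_nonneg {m : ℕ} (σ : ℝ) (hσ : 0 < σ) (f : (Fin m → ℝ) → Fin m → ℝ) (x : Fin m → ℝ) :
    0 ≤ defect σ f x := by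
  unfold defect; positivity

namespace QuadBound
variable {m : ℕ} {B r : ℝ} {f : (Fin m → ℝ) → Fin m → ℝ}

lemma abs_jac_le (H : QuadBound m B r f) (x : Fin m → ℝ) (hx : ∑ k, |x k| < r) (i j : Fin m) :
    |jac f x i j| ≤ B * ∑ k, |x k| := H.abs_partial_le i j x hx

lemma mul_l1_lt_one (hm : 0 < m) (hB : 0 < B) (hr2 : m * B * r ≤ 1) (x : Fin m → ℝ)
    (hx : ∑ k, |x k| < r) : m * (B * ∑ k, |x k|) < 1 := by
  have : (0 : ℝ) < m := by exact_mod_cast hm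
  rw [← mul_assoc]
  exact lt_of_lt_of_le (mul_lt_mul_of_pos_left hx (by positivity)) hr2

/-- The pointwise inequality behind `preimage_le`. -/
lemma gdens_le (H : QuadBound m B r f) (hm : 0 < m) (hB : 0 < B) (hr2 : m * B * r ≤ 1)
    (σ : ℝ) (hσ : 0 < σ) (x : Fin m → ℝ) (hx : ∑ k, |x k| < r) :
    gdens m σ x ≤ |(1 + jac f x).det| * gdens m σ (x + f x) + gdens m σ x * defect σ f x := by
  have hlt := mul_l1_lt_one hm hB hr2 x hx
  have hdet := one_sub_le_det_one_add m (jac f x) _ (by positivity) hlt (H.abs_jac_le x hx)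
  have hd0 : 0 ≤ (1 + jac f x).det := by linarith
  have key := one_le_mul_exp_add (1 + jac f x).det
    (∑ i, (x i * f x i / σ + f x i ^ 2 / (2 * σ)))
    (∑ i, max 0 (x i * f x i) / σ + ∑ i, f x i ^ 2 / (2 * σ)) hd0 (by
      rw [← Finset.sum_add_distrib]
      gcongr
      exact le_max_right _ _) (by positivity)
  rw [abs_of_nonneg hd0, gdens_add σ hσ]
  have h0 := gdens_nonneg m σ x
  calc gdens m σ x = gdens m σ x * 1 := (mul_one _).symm
    _ ≤ gdens m σ x * _ := mul_le_mul_of_nonneg_left key h0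
    _ = _ := by unfold defect; ring

lemma measurable_map (H : QuadBound m B r f) : Measurable fun x => x + f x :=
  (continuous_id.add H.contDiff.continuous).measurable

lemma continuous_defect (H : QuadBound m B r f) (σ : ℝ) : Continuous (defect σ f) := by
  have h1 := H.continuous_jac
  have h2 := H.contDiff.continuous
  unfold defect
  fun_prop

lemma isOpen_l1 (m : ℕ) (r : ℝ) : IsOpen {x : Fin m → ℝ | ∑ k, |x k| < r} :=
  isOpen_lt (by fun_prop) (by fun_prop)

/-- Change of variables on `T⁻¹(A) ∩ U`, where `T x = x + f x` and `U` is the `ℓ¹` ball of radius `r`: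
the `γ`-mass of `T⁻¹(A)` exceeds that of `A` by at most `γ(Uᶜ)` and the integrated defect. -/
lemma preimage_le (H : QuadBound m B r f) (hm : 0 < m) (hB : 0 < B) (hr2 : m * B * r ≤ 1)
    (σ : ℝ) (hσ : 0 < σ) (A : Set (Fin m → ℝ)) (hA : MeasurableSet A) :
    gaussPi m 0 σ ((fun x => x + f x) ⁻¹' A) ≤ gaussPi m 0 σ A +
      (gaussPi m 0 σ {x | ∑ k, |x k| < r}ᶜ +
        ∫⁻ x in {x | ∑ k, |x k| < r}, ENNReal.ofReal (defect σ f x) ∂(gaussPi m 0 σ)) := by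
  set U := {x : Fin m → ℝ | ∑ k, |x k| < r} with hU
  have hUm : MeasurableSet U := (isOpen_l1 m r).measurableSet
  set T := fun x => x + f x with hT
  set γ := gaussPi m 0 σ with hγ
  set S := T ⁻¹' A ∩ U with hS
  have hSm : MeasurableSet S := (H.measurable_map hA).inter hUm
  have hg := measurable_gdens m σ
  have hdens : ∀ C, MeasurableSet C → γ C = ∫⁻ x in C, ENNReal.ofReal (gdens m σ x) := by
    intro C hC
    rw [hγ, gaussPi_eq_withDensity m σ hσ, withDensity_apply _ hC]
  have himg : ∫⁻ y in T '' S, ENNReal.ofReal (gdens m σ y) =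
      ∫⁻ x in S, ENNReal.ofReal |(1 + jac f x).det| * ENNReal.ofReal (gdens m σ (T x)) := by
    rw [lintegral_image_eq_lintegral_abs_det_fderiv_mul volume hSm
      (fun x _ => (H.hasFDerivAt x).hasFDerivWithinAt)
      ((H.injOn hB hm hr2).mono Set.inter_subset_right)]
    simp_rw [det_fderiv]
    rfl
  have hTS : ∫⁻ y in T '' S, ENNReal.ofReal (gdens m σ y) ≤ γ A := by
    rw [hdens A hA]
    refine lintegral_mono_set ?_
    rintro _ ⟨x, hx, rfl⟩
    exact hx.1
  have hSle : γ S ≤ γ A + ∫⁻ x in U, ENNReal.ofReal (defect σ f x) ∂γ := by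
    have hdef : ∫⁻ x in S, ENNReal.ofReal (gdens m σ x) * ENNReal.ofReal (defect σ f x) =
        ∫⁻ x in S, ENNReal.ofReal (defect σ f x) ∂γ := by
      rw [hγ, gaussPi_eq_withDensity m σ hσ, setLIntegral_withDensity_eq_setLIntegral_mul _
        (by fun_prop) (H.continuous_defect σ).measurable.ennreal_ofReal hSm]
      rfl
    calc γ S = ∫⁻ x in S, ENNReal.ofReal (gdens m σ x) := hdens S hSm
      _ ≤ ∫⁻ x in S, (ENNReal.ofReal |(1 + jac f x).det| * ENNReal.ofReal (gdens m σ (T x)) +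
          ENNReal.ofReal (gdens m σ x) * ENNReal.ofReal (defect σ f x)) := by
          refine setLIntegral_mono' hSm fun x hx => ?_
          rw [← ENNReal.ofReal_mul (abs_nonneg _), ← ENNReal.ofReal_mul (gdens_nonneg _ _ _),
            ← ENNReal.ofReal_add (mul_nonneg (abs_nonneg _) (gdens_nonneg _ _ _))
              (mul_nonneg (gdens_nonneg _ _ _) (defect_nonneg σ hσ f x))]
          exact ENNReal.ofReal_le_ofReal (H.gdens_le hm hB hr2 σ hσ x hx.2)
      _ = (∫⁻ x in S, ENNReal.ofReal |(1 + jac f x).det| * ENNReal.ofReal (gdens m σ (T x))) +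
          ∫⁻ x in S, ENNReal.ofReal (gdens m σ x) * ENNReal.ofReal (defect σ f x) :=
          lintegral_add_right _ (hg.ennreal_ofReal.mul
            (H.continuous_defect σ).measurable.ennreal_ofReal)
      _ ≤ _ := by
          rw [← himg, hdef]
          exact add_le_add hTS (lintegral_mono_set Set.inter_subset_right)
  calc γ (T ⁻¹' A) ≤ γ (S ∪ Uᶜ) := measure_mono fun x hx => by
        by_cases h : x ∈ U
        · exact Or.inl ⟨hx, h⟩
        · exact Or.inr h
    _ ≤ γ S + γ Uᶜ := measure_union_le _ _
    _ ≤ _ := by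
        rw [add_comm (γ Uᶜ), ← add_assoc]
        gcongr

lemma sum_update (x : Fin m → ℝ) (i : Fin m) (t : ℝ) :
    ∑ k, |Function.update x i t k| = |t| + ∑ k ∈ univ.erase i, |x k| := by
  rw [← Finset.add_sum_erase _ _ (Finset.mem_univ i)]
  congr 1
  · simp
  · refine Finset.sum_congr rfl fun k hk => ?_
    rw [Function.update_of_ne (Finset.ne_of_mem_erase hk)]

/-- `slice_gauss` on each line parallel to the `i`-th axis, which meets the `ℓ¹` ball in a symmetric
interval. The boundary term is bounded by `|f_i| ≤ B/2 (∑_{k ≠ i} |x_k|)²` on `x_i = 0` and the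
Cauchy–Schwarz inequality. -/
lemma lintegral_drift_le (H : QuadBound m B r f) (hm : 0 < m) (hB : 0 < B)
    (σ : ℝ) (hσ : 0 < σ) (i : Fin m) :
    ∫⁻ x in {x | ∑ k, |x k| < r}, ENNReal.ofReal (max 0 (x i * f x i) / σ) ∂(gaussPi m 0 σ) ≤
      (∫⁻ x in {x | ∑ k, |x k| < r}, ENNReal.ofReal (max 0 (jac f x i i)) ∂(gaussPi m 0 σ)) +
        ENNReal.ofReal (B / 2 * (√(2 * Real.pi * σ))⁻¹ * ((m - 1) * ((m - 1) * σ))) := by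
  set U := {x : Fin m → ℝ | ∑ k, |x k| < r} with hU
  have hUm : MeasurableSet U := (isOpen_l1 m r).measurableSet
  have hjc : Continuous fun x => jac f x i i := (H.contDiff_partial i i).continuous
  have hfc : Continuous fun x => f x i := (H.contDiff_comp i).continuous
  set c := B / 2 * (√(2 * Real.pi * σ))⁻¹ * (m - 1) with hc
  have hm1 : (0 : ℝ) ≤ m - 1 := by
    have : (1 : ℝ) ≤ m := by exact_mod_cast hm
    linarith
  have hc0 : 0 ≤ c := by positivity
  set q : (Fin m → ℝ) → ℝ := fun x => ∑ k ∈ univ.erase i, x k ^ 2 with hq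
  have hq0 : ∀ x, 0 ≤ q x := fun x => by simp only [hq]; positivity
  have hcard : ((#(univ.erase i) : ℕ) : ℝ) = m - 1 := by
    rw [Finset.card_erase_of_mem (Finset.mem_univ i), Finset.card_univ, Fintype.card_fin,
      Nat.cast_sub (by omega)]
    simp
  have hlast : ∫⁻ x, ENNReal.ofReal (c * q x) ∂(gaussPi m 0 σ) =
      ENNReal.ofReal (B / 2 * (√(2 * Real.pi * σ))⁻¹ * ((m - 1) * ((m - 1) * σ))) := by
    simp_rw [ENNReal.ofReal_mul hc0]
    rw [lintegral_const_mul _ (by fun_prop), hq, lintegral_sq m σ hσ, hcard, ← ENNReal.ofReal_mul hc0]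
    congr 1; rw [hc]; ring
  rw [← hlast, ← lintegral_indicator hUm, ← lintegral_indicator hUm,
    ← lintegral_add_right _ (by fun_prop)]
  unfold gaussPi
  refine lintegral_le_of_lmarginal_le {i} ?_ ?_ ?_
  · exact Measurable.indicator (by fun_prop) hUm
  · exact (Measurable.indicator (by fun_prop) hUm).add (by fun_prop)
  rw [lmarginal_singleton, lmarginal_singleton]
  intro x
  simp only [Pi.zero_apply]
  set R := r - ∑ k ∈ univ.erase i, |x k| with hR
  rcases le_or_gt R 0 with hR0 | hR0
  · have : ∀ t, Function.update x i t ∉ U := by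
      intro t ht
      simp only [hU, Set.mem_ofPred_eq, sum_update] at ht
      linarith [abs_nonneg t]
    simp [Set.indicator_of_notMem (this _)]
  have hmem : ∀ t, Function.update x i t ∈ U ↔ t ∈ Set.Ioo (-R) R := by
    intro t
    simp only [hU, Set.mem_ofPred_eq, sum_update, Set.mem_Ioo, ← abs_lt]
    constructor <;> intro h <;> linarith
  have hind : ∀ (h : (Fin m → ℝ) → ENNReal) (t : ℝ), U.indicator h (Function.update x i t) =
      (Set.Ioo (-R) R).indicator (fun t => h (Function.update x i t)) t := by
    intro h t
    by_cases ht : t ∈ Set.Ioo (-R) R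
    · rw [Set.indicator_of_mem ht, Set.indicator_of_mem ((hmem t).2 ht)]
    · rw [Set.indicator_of_notMem ht, Set.indicator_of_notMem (fun h => ht ((hmem t).1 h))]
  have hqc : ∀ t, q (Function.update x i t) = q x := by
    intro t
    simp only [hq]
    refine Finset.sum_congr rfl fun k hk => ?_
    rw [Function.update_of_ne (Finset.ne_of_mem_erase hk)]
  simp only [hind, hqc]
  rw [lintegral_add_right _ (by fun_prop), lintegral_const, measure_univ, mul_one,
    lintegral_indicator measurableSet_Ioo, lintegral_indicator measurableSet_Ioo]
  have hg : ∀ t, HasDerivAt (fun t => f (Function.update x i t) i)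
      (jac f (Function.update x i t) i i) t := by
    intro t
    have h1 := hasDerivAt_update x i t
    exact ((H.contDiff_comp i).differentiable (by norm_num) _).hasFDerivAt.comp_hasDerivAt t h1
  have hg' : Continuous fun t => jac f (Function.update x i t) i i :=
    hjc.comp (continuous_const.update i continuous_id)
  have hs := slice_gauss σ R hσ hR0.le _ _ hg hg'
  simp only [Function.update_self]
  refine hs.trans ?_
  refine add_le_add le_rfl (ENNReal.ofReal_le_ofReal ?_)
  have h0U : Function.update x i 0 ∈ U := (hmem 0).2 ⟨by linarith, hR0⟩
  have hb := H.abs_le i _ h0U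
  rw [sum_update, abs_zero, zero_add] at hb
  have hcs := sq_sum_le_card_mul_sum_sq (s := univ.erase i) (f := fun k => |x k|)
  rw [hcard] at hcs
  simp only [sq_abs] at hcs
  calc |f (Function.update x i 0) i| * (√(2 * Real.pi * σ))⁻¹
      ≤ (B / 2 * ((m - 1) * q x)) * (√(2 * Real.pi * σ))⁻¹ := by
        gcongr
        exact hb.trans (by gcongr)
    _ = c * q x := by rw [hc]; ring

end QuadBound

/-! ### Bounding the error -/

/-- On the complement of the `ℓ¹` ball `U` of radius `r` one has `m B ‖x‖₁ ≥ m B r`, so extending the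
integral over `U` to all of `ℝ^m` absorbs the fraction `m B r` of the mass of `Uᶜ`. -/
lemma tail_add_lintegral_le (m : ℕ) (hm : 0 < m) (σ B r : ℝ) (hσ : 0 < σ) (hB : 0 < B)
    (hr1 : m * √(2 * σ / Real.pi) < r) (hr2 : m * B * r ≤ 1) :
    gaussPi m 0 σ {x | ∑ k, |x k| < r}ᶜ +
      ∫⁻ x in {x | ∑ k, |x k| < r}, ENNReal.ofReal (m * (B * ∑ k, |x k|)) ∂(gaussPi m 0 σ) ≤
    ENNReal.ofReal (m ^ 2 * B * √(2 * σ / Real.pi)) + ENNReal.ofReal ((1 - m * B * r) *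
      Real.exp (-(r / (2 * √σ) - m / √(2 * Real.pi)) ^ 2 / m)) := by
  set U := {x : Fin m → ℝ | ∑ k, |x k| < r} with hU
  have hUm : MeasurableSet U := (QuadBound.isOpen_l1 m r).measurableSet
  set γ := gaussPi m 0 σ with hγ
  have hr0 : 0 ≤ r := le_trans (by positivity) hr1.le
  have hρ : 0 ≤ 1 - m * B * r := by linarith
  have hUc : γ Uᶜ ≤
      ENNReal.ofReal (Real.exp (-(r / (2 * √σ) - m / √(2 * Real.pi)) ^ 2 / m)) := by
    have := tail_bound m hm σ r hσ hr1
    have e : Uᶜ = {x : Fin m → ℝ | r ≤ ∑ k, |x k|} := by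
      ext x; simp [hU]
    rw [← e, measureReal_def] at this
    exact (ENNReal.le_ofReal_iff_toReal_le (measure_ne_top _ _) (Real.exp_pos _).le).2 this
  have hout : ENNReal.ofReal (m * B * r) * γ Uᶜ ≤
      ∫⁻ x in Uᶜ, ENNReal.ofReal (m * (B * ∑ k, |x k|)) ∂γ := by
    rw [← setLIntegral_const]
    refine setLIntegral_mono' hUm.compl fun x hx => ENNReal.ofReal_le_ofReal ?_
    rw [← mul_assoc]
    refine mul_le_mul_of_nonneg_left ?_ (by positivity)
    simpa [hU] using hx
  have hsplit : γ Uᶜ = ENNReal.ofReal (1 - m * B * r) * γ Uᶜ +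
      ENNReal.ofReal (m * B * r) * γ Uᶜ := by
    rw [← add_mul, ← ENNReal.ofReal_add hρ (by positivity)]
    simp
  have hmean : ∫⁻ x, ENNReal.ofReal (m * (B * ∑ k, |x k|)) ∂γ =
      ENNReal.ofReal (m ^ 2 * B * √(2 * σ / Real.pi)) := by
    simp_rw [← mul_assoc]
    simp_rw [ENNReal.ofReal_mul (show 0 ≤ m * B by positivity)]
    rw [lintegral_const_mul _ (by fun_prop), lintegral_l1 m σ hσ,
      ← ENNReal.ofReal_mul (by positivity)]
    congr 1; ring
  rw [← hmean, ENNReal.ofReal_mul hρ,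
    ← lintegral_add_compl (μ := γ) (fun x => ENNReal.ofReal (m * (B * ∑ k, |x k|))) hUm]
  calc _ = (ENNReal.ofReal (1 - m * B * r) * γ Uᶜ + ENNReal.ofReal (m * B * r) * γ Uᶜ) +
        ∫⁻ x in U, ENNReal.ofReal (m * (B * ∑ k, |x k|)) ∂γ := by rw [← hsplit]
    _ = (∫⁻ x in U, ENNReal.ofReal (m * (B * ∑ k, |x k|)) ∂γ +
        ENNReal.ofReal (m * B * r) * γ Uᶜ) + ENNReal.ofReal (1 - m * B * r) * γ Uᶜ := by ring
    _ ≤ _ := by gcongr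

namespace QuadBound
variable {m : ℕ} {B r : ℝ} {f : (Fin m → ℝ) → Fin m → ℝ}

/-- The quadratic term, by `f_i² ≤ B² ‖x‖₁⁴ / 4` and the power mean inequality
`‖x‖₁⁴ ≤ m³ ∑ x_k⁴`. -/
lemma lintegral_quad_le (H : QuadBound m B r f) (hB : 0 < B) (σ : ℝ) (hσ : 0 < σ) :
    ∫⁻ x in {x | ∑ k, |x k| < r}, ENNReal.ofReal (∑ i, f x i ^ 2 / (2 * σ)) ∂(gaussPi m 0 σ) ≤
      ENNReal.ofReal (3 * m ^ 5 * B ^ 2 * σ / 8) := by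
  have hUm : MeasurableSet {x : Fin m → ℝ | ∑ k, |x k| < r} := (isOpen_l1 m r).measurableSet
  set c : ℝ := m ^ 4 * B ^ 2 / (8 * σ) with hc
  have hc0 : 0 ≤ c := by positivity
  calc _ ≤ ∫⁻ x in {x | ∑ k, |x k| < r}, ENNReal.ofReal (c * ∑ i, x i ^ 4) ∂(gaussPi m 0 σ) := by
        refine setLIntegral_mono' hUm fun x hx => ENNReal.ofReal_le_ofReal ?_
        have hp : (∑ k, |x k|) ^ 4 ≤ m ^ 3 * ∑ k, x k ^ 4 := by
          rcases Nat.eq_zero_or_pos m with rfl | hm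
          · simp
          have h := pow_sum_div_card_le_sum_pow (s := univ) (f := fun k => |x k|)
            (fun k _ => abs_nonneg _) 3
          rw [Finset.card_univ, Fintype.card_fin, div_le_iff₀' (by positivity)] at h
          simpa [Even.pow_abs (show Even 4 by decide)] using h
        have hi : ∀ i, f x i ^ 2 / (2 * σ) ≤ B ^ 2 / (8 * σ) * (m ^ 3 * ∑ k, x k ^ 4) := by
          intro i
          have h1 := H.abs_le i x hx
          have h2 : f x i ^ 2 ≤ (B / 2 * (∑ k, |x k|) ^ 2) ^ 2 := by
            rw [← sq_abs]; gcongr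
          calc f x i ^ 2 / (2 * σ) ≤ (B / 2 * (∑ k, |x k|) ^ 2) ^ 2 / (2 * σ) := by gcongr
            _ = B ^ 2 / (8 * σ) * (∑ k, |x k|) ^ 4 := by field_simp; ring
            _ ≤ _ := by gcongr
        calc ∑ i, f x i ^ 2 / (2 * σ)
            ≤ ∑ _i : Fin m, B ^ 2 / (8 * σ) * (m ^ 3 * ∑ k, x k ^ 4) :=
              Finset.sum_le_sum fun i _ => hi i
          _ = c * ∑ i, x i ^ 4 := by simp [hc]; ring
    _ ≤ ∫⁻ x, ENNReal.ofReal (c * ∑ i, x i ^ 4) ∂(gaussPi m 0 σ) := setLIntegral_le_lintegral _ _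
    _ = _ := by
        simp_rw [ENNReal.ofReal_mul hc0]
        rw [lintegral_const_mul _ (by fun_prop), lintegral_pow_four m σ hσ,
          ← ENNReal.ofReal_mul hc0]
        congr 1; rw [hc]; field_simp

/-- The total error, given a pointwise bound `(1 + a) m B ‖x‖₁` for the determinant loss together with
the positive diagonal derivatives. It is applied with `a = 0` for `m ≤ 2` and `a = 1` for `m ≥ 3`. -/
lemma error_le_of_pointwise (H : QuadBound m B r f) (hm : 0 < m) (hB : 0 < B) (σ : ℝ) (hσ : 0 < σ)
    (hr1 : m * √(2 * σ / Real.pi) < r) (hr2 : m * B * r ≤ 1) (a : ℝ) (ha : 0 ≤ a)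
    (hpt : ∀ x : Fin m → ℝ, ∑ k, |x k| < r →
      max 0 (1 - (1 + jac f x).det) + ∑ i, max 0 (jac f x i i) ≤
        m * (B * ∑ k, |x k|) + a * (m * (B * ∑ k, |x k|))) :
    gaussPi m 0 σ {x | ∑ k, |x k| < r}ᶜ +
        ∫⁻ x in {x | ∑ k, |x k| < r}, ENNReal.ofReal (defect σ f x) ∂(gaussPi m 0 σ) ≤
      ENNReal.ofReal ((1 + a) * (m ^ 2 * B * √(2 * σ / Real.pi)) +
        m * (m - 1) ^ 2 * B * √(2 * σ / Real.pi) / 4 + 3 * m ^ 5 * B ^ 2 * σ / 8 +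
        (1 - m * B * r) * Real.exp (-(r / (2 * √σ) - m / √(2 * Real.pi)) ^ 2 / m)) := by
  set U := {x : Fin m → ℝ | ∑ k, |x k| < r} with hU
  have hUm : MeasurableSet U := (isOpen_l1 m r).measurableSet
  set γ := gaussPi m 0 σ with hγ
  set μ := √(2 * σ / Real.pi) with hμ
  set E := Real.exp (-(r / (2 * √σ) - m / √(2 * Real.pi)) ^ 2 / m) with hE
  have hE0 : 0 ≤ E := (Real.exp_pos _).le
  have hρ : 0 ≤ 1 - m * B * r := by linarith
  have hjac := H.continuous_jac
  have hfc := H.contDiff.continuous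
  have hdet : Continuous fun x => max 0 (1 - (1 + jac f x).det) := by fun_prop
  have hjii : ∀ i, Continuous fun x => max 0 (jac f x i i) := fun i => by fun_prop
  have hdr : ∀ i, Continuous fun x => max 0 (x i * f x i) / σ := fun i => by fun_prop
  have hq : Continuous fun x => ∑ i, f x i ^ 2 / (2 * σ) := by fun_prop
  set c : ℝ := B / 2 * (√(2 * Real.pi * σ))⁻¹ * ((m - 1) * ((m - 1) * σ)) with hc
  have hm1 : (0 : ℝ) ≤ m - 1 := by
    have : (1 : ℝ) ≤ m := by exact_mod_cast hm
    linarith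
  have hc0 : 0 ≤ c := by positivity
  have hceq : m * c = m * (m - 1) ^ 2 * B * μ / 4 := by
    have h1 : √(2 * Real.pi * σ) * μ = 2 * σ := by
      rw [hμ, ← Real.sqrt_mul (by positivity), show 2 * Real.pi * σ * (2 * σ / Real.pi) =
        (2 * σ) ^ 2 by field_simp, Real.sqrt_sq (by positivity)]
    have h2 : (√(2 * Real.pi * σ))⁻¹ * σ = μ / 2 := by
      have : √(2 * Real.pi * σ) ≠ 0 := by positivity
      field_simp
      linarith
    calc m * c = m * (m - 1) ^ 2 * B / 2 * ((√(2 * Real.pi * σ))⁻¹ * σ) := by rw [hc]; ring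
      _ = _ := by rw [h2]; ring
  have hsplit : ∫⁻ x in U, ENNReal.ofReal (defect σ f x) ∂γ =
      ∫⁻ x in U, ENNReal.ofReal (max 0 (1 - (1 + jac f x).det)) ∂γ +
        (∑ i, ∫⁻ x in U, ENNReal.ofReal (max 0 (x i * f x i) / σ) ∂γ +
          ∫⁻ x in U, ENNReal.ofReal (∑ i, f x i ^ 2 / (2 * σ)) ∂γ) := by
    rw [← lintegral_finsetSum _ (fun i _ => (hdr i).measurable.ennreal_ofReal),
      ← lintegral_add_right _ hq.measurable.ennreal_ofReal,
      ← lintegral_add_left hdet.measurable.ennreal_ofReal]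
    refine lintegral_congr fun x => ?_
    unfold defect
    rw [ENNReal.ofReal_add (by positivity) (by positivity),
      ENNReal.ofReal_add (by positivity) (by positivity),
      ENNReal.ofReal_sum_of_nonneg (fun i _ => by positivity)]
  have hdrift : ∑ i, ∫⁻ x in U, ENNReal.ofReal (max 0 (x i * f x i) / σ) ∂γ ≤
      ∑ i, ∫⁻ x in U, ENNReal.ofReal (max 0 (jac f x i i)) ∂γ + ENNReal.ofReal (m * c) := by
    refine (Finset.sum_le_sum fun i _ => H.lintegral_drift_le hm hB σ hσ i).trans ?_
    rw [Finset.sum_add_distrib]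
    refine add_le_add le_rfl (le_of_eq ?_)
    rw [← hc, Finset.sum_const, nsmul_eq_mul, ENNReal.ofReal_mul (Nat.cast_nonneg m),
      ENNReal.ofReal_natCast]
    simp
  have hpoint : ∫⁻ x in U, ENNReal.ofReal (max 0 (1 - (1 + jac f x).det)) ∂γ +
      ∑ i, ∫⁻ x in U, ENNReal.ofReal (max 0 (jac f x i i)) ∂γ ≤
      ∫⁻ x in U, ENNReal.ofReal (m * (B * ∑ k, |x k|)) ∂γ +
        ENNReal.ofReal (a * (m ^ 2 * B * μ)) := by
    have hmean : ∫⁻ x, ENNReal.ofReal (a * (m * (B * ∑ k, |x k|))) ∂γ =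
        ENNReal.ofReal (a * (m ^ 2 * B * μ)) := by
      have e : ∀ x : Fin m → ℝ, a * (m * (B * ∑ k, |x k|)) = (a * m * B) * ∑ k, |x k| :=
        fun x => by ring
      simp_rw [e]
      simp_rw [ENNReal.ofReal_mul (show 0 ≤ a * m * B by positivity)]
      rw [lintegral_const_mul _ (by fun_prop), lintegral_l1 m σ hσ,
        ← ENNReal.ofReal_mul (by positivity)]
      congr 1; ring
    rw [← hmean, ← lintegral_finsetSum _ (fun i _ => (hjii i).measurable.ennreal_ofReal),
      ← lintegral_add_left hdet.measurable.ennreal_ofReal]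
    refine le_trans ?_ (add_le_add le_rfl (setLIntegral_le_lintegral U _))
    rw [← lintegral_add_left (by fun_prop)]
    refine setLIntegral_mono' hUm fun x hx => ?_
    rw [← ENNReal.ofReal_sum_of_nonneg (fun i _ => le_max_left _ _),
      ← ENNReal.ofReal_add (by positivity) (by positivity),
      ← ENNReal.ofReal_add (by positivity) (by positivity)]
    exact ENNReal.ofReal_le_ofReal (hpt x hx)
  have htail := tail_add_lintegral_le m hm σ B r hσ hB hr1 hr2
  have hquad := H.lintegral_quad_le hB σ hσ
  rw [← hU, ← hγ] at htail hquad
  rw [← hμ, ← hE] at htail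
  rw [hsplit]
  set I1 := ∫⁻ x in U, ENNReal.ofReal (max 0 (1 - (1 + jac f x).det)) ∂γ
  set I2 := ∑ i, ∫⁻ x in U, ENNReal.ofReal (max 0 (x i * f x i) / σ) ∂γ
  set I3 := ∫⁻ x in U, ENNReal.ofReal (∑ i, f x i ^ 2 / (2 * σ)) ∂γ
  set I4 := ∑ i, ∫⁻ x in U, ENNReal.ofReal (max 0 (jac f x i i)) ∂γ
  set I5 := ∫⁻ x in U, ENNReal.ofReal (m * (B * ∑ k, |x k|)) ∂γ
  calc γ Uᶜ + (I1 + (I2 + I3))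
      ≤ γ Uᶜ + (I1 + ((I4 + ENNReal.ofReal (m * c)) +
          ENNReal.ofReal (3 * m ^ 5 * B ^ 2 * σ / 8))) := by gcongr
    _ = γ Uᶜ + ((I1 + I4) + (ENNReal.ofReal (m * c) +
          ENNReal.ofReal (3 * m ^ 5 * B ^ 2 * σ / 8))) := by ring
    _ ≤ γ Uᶜ + ((I5 + ENNReal.ofReal (a * (m ^ 2 * B * μ))) + (ENNReal.ofReal (m * c) +
          ENNReal.ofReal (3 * m ^ 5 * B ^ 2 * σ / 8))) := by gcongr
    _ = (γ Uᶜ + I5) + (ENNReal.ofReal (a * (m ^ 2 * B * μ)) + (ENNReal.ofReal (m * c) +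
          ENNReal.ofReal (3 * m ^ 5 * B ^ 2 * σ / 8))) := by ring
    _ ≤ (ENNReal.ofReal (m ^ 2 * B * μ) + ENNReal.ofReal ((1 - m * B * r) * E)) +
          (ENNReal.ofReal (a * (m ^ 2 * B * μ)) + (ENNReal.ofReal (m * c) +
          ENNReal.ofReal (3 * m ^ 5 * B ^ 2 * σ / 8))) := by gcongr
    _ = _ := by
        rw [← ENNReal.ofReal_add (by positivity) (by positivity),
          ← ENNReal.ofReal_add (by positivity) (by positivity),
          ← ENNReal.ofReal_add (by positivity) (by positivity),
          ← ENNReal.ofReal_add (by positivity) (by positivity), hceq]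
        congr 1; ring

lemma error_le (H : QuadBound m B r f) (hm : 0 < m) (hB : 0 < B) (σ : ℝ) (hσ : 0 < σ)
    (hr1 : m * √(2 * σ / Real.pi) < r) (hr2 : m * B * r ≤ 1) :
    gaussPi m 0 σ {x | ∑ k, |x k| < r}ᶜ +
        ∫⁻ x in {x | ∑ k, |x k| < r}, ENNReal.ofReal (defect σ f x) ∂(gaussPi m 0 σ) ≤
      ENNReal.ofReal
        ((4 * (m + 2) * m ^ 2 * B * √(2 * σ / Real.pi) + 3 * m ^ 5 * B ^ 2 * σ) / 8 +
        (1 - B * m * r) * Real.exp (-(r / (2 * √σ) - m / √(2 * Real.pi)) ^ 2 / m)) := by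
  set μ := √(2 * σ / Real.pi) with hμ
  have hBμ : 0 ≤ B * μ := by positivity
  have hm1 : (1 : ℝ) ≤ m := by exact_mod_cast hm
  rcases le_or_gt m 2 with h2 | h2
  · refine (H.error_le_of_pointwise hm hB σ hσ hr1 hr2 0 le_rfl fun x hx => ?_).trans
      (ENNReal.ofReal_le_ofReal ?_)
    · rw [zero_mul, add_zero]
      exact det_add_diag_le_small h2 _ _ (mul_l1_lt_one hm hB hr2 x hx) (H.abs_jac_le x hx)
    · have : (0 : ℝ) ≤ m ^ 3 / 2 - m * (m - 1) ^ 2 / 4 := by nlinarith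
      rw [mul_comm B]
      nlinarith [mul_nonneg this hBμ]
  · refine (H.error_le_of_pointwise hm hB σ hσ hr1 hr2 1 zero_le_one fun x hx => ?_).trans
      (ENNReal.ofReal_le_ofReal ?_)
    · rw [one_mul]
      exact det_add_diag_le _ _ (by positivity) (mul_l1_lt_one hm hB hr2 x hx) (H.abs_jac_le x hx)
    -- `2m² + m(m-1)²/4 ≤ m² + m³/2` amounts to `m² - 2m - 1 ≥ 0`.
    · have h3 : (3 : ℝ) ≤ m := by exact_mod_cast h2
      have : (0 : ℝ) ≤ m * ((m : ℝ) ^ 2 - 2 * m - 1) / 4 := by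
        have : (0 : ℝ) ≤ (m : ℝ) ^ 2 - 2 * m - 1 := by nlinarith
        positivity
      rw [mul_comm B]
      nlinarith [mul_nonneg this hBμ]

end QuadBound

lemma conv_dirac_zero (m : ℕ) (Q : Measure (Fin m → ℝ)) [SFinite Q] :
    conv m (Measure.dirac 0) Q = Q := by
  unfold conv
  rw [Measure.dirac_prod, Measure.map_map (by fun_prop) (by fun_prop)]
  have : (fun p : (Fin m → ℝ) × (Fin m → ℝ) => p.1 + p.2) ∘ Prod.mk 0 = id := by
    ext x; simp
  rw [this, Measure.map_id]

/-- A one-sided bound suffices for probability measures, by passing to complements. -/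
lemma l1Dist_le_of_le {E : Type*} [MeasurableSpace E] (P Q : Measure E) [IsProbabilityMeasure P]
    [IsProbabilityMeasure Q] (ε : ℝ) (hε : 0 ≤ ε)
    (h : ∀ A, MeasurableSet A → P A ≤ Q A + ENNReal.ofReal ε) : l1Dist P Q ≤ 2 * ε := by
  have hreal : ∀ A, MeasurableSet A → P.real A ≤ Q.real A + ε := by
    intro A hA
    have := ENNReal.toReal_mono (by finiteness) (h A hA)
    rwa [ENNReal.toReal_add (by finiteness) (by finiteness), ENNReal.toReal_ofReal hε] at this
  unfold l1Dist
  gcongr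
  have : Nonempty {s : Set E // MeasurableSet s} := ⟨⟨∅, MeasurableSet.empty⟩⟩
  refine ciSup_le fun A => ?_
  have h1 := hreal A.1 A.2
  have h2 := hreal A.1ᶜ A.2.compl
  rw [probReal_compl_eq_one_sub A.2, probReal_compl_eq_one_sub A.2] at h2
  simp only [measureReal_def] at h1 h2
  rw [abs_le]
  constructor <;> linarith

theorem stmt15 (m : ℕ) (hm : 0 < m) (σ B r : ℝ) (hσ : 0 < σ) (hB : 0 < B)
    (hr1 : m * Real.sqrt (2 * σ / Real.pi) < r) (hr2 : r ≤ 1 / (m * B))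
    (f : (Fin m → ℝ) → Fin m → ℝ) (hf : ContDiff ℝ 2 f)
    (hf0 : f 0 = 0)
    (hd1 : ∀ i j : Fin m, fderiv ℝ (fun x => f x i) 0 (Pi.single j 1) = 0)
    (hd2 : ∀ (i j j' : Fin m) (x : Fin m → ℝ), (∑ k, |x k|) < r →
      |fderiv ℝ (fun y => fderiv ℝ (fun w => f w i) y (Pi.single j 1)) x (Pi.single j' 1)|
        ≤ B) :
    IsBlurring m σ
      ((4 * (m + 2) * m ^ 2 * B * Real.sqrt (2 * σ / Real.pi) + 3 * m ^ 5 * B ^ 2 * σ) / 8 +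
        (1 - B * m * r) *
          Real.exp (-(r / (2 * Real.sqrt σ) - m / Real.sqrt (2 * Real.pi)) ^ 2 / m))
      ((gaussPi m 0 σ).map fun x => x + f x) := by
  have H : QuadBound m B r f := ⟨hf, hf0, hd1, hd2⟩
  have hm0 : (0 : ℝ) < m := by exact_mod_cast hm
  have hmBr : m * B * r ≤ 1 := by
    rw [mul_comm]
    exact (le_div_iff₀ (by positivity)).1 hr2
  have hρ : 0 ≤ 1 - B * m * r := by linarith [mul_comm B (m : ℝ) ▸ hmBr]
  refine ⟨Measure.dirac 0, inferInstance, ?_⟩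
  rw [conv_dirac_zero]
  have : IsProbabilityMeasure ((gaussPi m 0 σ).map fun x => x + f x) :=
    Measure.isProbabilityMeasure_map H.measurable_map.aemeasurable
  refine l1Dist_le_of_le _ _ _ (by positivity) fun A hA => ?_
  rw [Measure.map_apply H.measurable_map hA]
  exact (H.preimage_le hm hB hmBr σ hσ A hA).trans
    (add_le_add le_rfl (H.error_le hm hB σ hσ hr1 hmBr))
end

section
/- Let σ > 0, let m be a positive integer, and let r > m√(2σ/π). Then (2πσ)^{−m/2} ∫_{{x ∈ ℝ^m : ‖x‖₁ ≥ r}} e^{−‖x‖₂²/(2σ)} dx ≤ e^{−(r/(2√σ) − m/√(2π))²/m}. -/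
open Finset MeasureTheory

/-!
The proof is the Chernoff bound for `‖X‖₁`, where `X` is a centred Gaussian vector with covariance
`σ I`. By `abs_mgf_le`, the moment generating function of one coordinate satisfies, for `0 ≤ l`,
`E exp (l |X₁|) = 2 exp (σ l² / 2) P(X₁ > -σ l) ≤ exp (σ l² / 2) (1 + l √(2σ/π))`,
because the Gaussian density is at most `1 / √(2πσ)` on the interval `(-σ l, 0]`; moreover
`1 + l √(2σ/π) ≤ exp (l √(2σ/π))`. Multiplying over the coordinates and choosing
`l = t / (m σ)` with `t = r - m √(2σ/π)` bounds the tail by `exp (-t² / (2 m σ))`, while the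
right-hand side of the theorem equals the larger number `exp (-t² / (4 m σ))`.
-/

lemma integrable_exp_abs_sub_sq (σ : ℝ) (hσ : 0 < σ) (l : ℝ) :
    Integrable (fun x : ℝ => Real.exp (l * |x| - x ^ 2 / (2 * σ))) := by
  have h := (integrable_exp_neg_mul_sq (b := 1 / (4 * σ)) (by positivity)).const_mul
    (Real.exp (l ^ 2 * σ))
  refine h.mono' (by fun_prop) (Filter.Eventually.of_forall fun x => ?_)
  rw [Real.norm_eq_abs, Real.abs_exp, ← Real.exp_add, Real.exp_le_exp]
  -- The difference of the two exponents is a perfect square.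
  have h2 : l ^ 2 * σ + -(1 / (4 * σ)) * x ^ 2 - (l * |x| - x ^ 2 / (2 * σ))
      = (2 * σ * l - |x|) ^ 2 / (4 * σ) := by
    rw [← sq_abs x]
    field_simp
    ring
  have h3 : 0 ≤ (2 * σ * l - |x|) ^ 2 / (4 * σ) := by positivity
  linarith

/-- A half-line Gaussian integral starting at `-c`: on `(-c, 0]` the integrand is at most `1`. -/
lemma integral_Ioi_gaussian_le (b c : ℝ) (hb : 0 < b) (hc : 0 ≤ c) :
    ∫ x in Set.Ioi (-c), Real.exp (-b * x ^ 2) ≤ c + Real.sqrt (Real.pi / b) / 2 := by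
  have hi := integrable_exp_neg_mul_sq hb
  have hc' : -c ≤ 0 := by linarith
  rw [← Set.Ioc_union_Ioi_eq_Ioi hc', setIntegral_union (Set.Ioc_disjoint_Ioi le_rfl)
    measurableSet_Ioi hi.integrableOn hi.integrableOn, integral_gaussian_Ioi]
  have h1 := norm_setIntegral_le_of_norm_le_const (μ := volume) (s := Set.Ioc (-c) 0)
    (f := fun x : ℝ => Real.exp (-b * x ^ 2)) (C := 1) (by simp) (fun x _ => by
      rw [Real.norm_eq_abs, Real.abs_exp, Real.exp_le_one_iff]
      nlinarith [sq_nonneg x])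
  have h2 : volume.real (Set.Ioc (-c) 0) = c := by
    rw [Real.volume_real_Ioc_of_le hc']; ring
  rw [h2] at h1
  have h3 := (le_abs_self _).trans h1
  linarith

/-- The moment generating function of the absolute value of a centred Gaussian of variance `σ`,
before normalization by `√(2πσ)`. -/
lemma abs_mgf_le (σ : ℝ) (hσ : 0 < σ) (l : ℝ) (hl : 0 ≤ l) :
    ∫ x : ℝ, Real.exp (l * |x| - x ^ 2 / (2 * σ)) ≤
      Real.sqrt (2 * Real.pi * σ) *
        Real.exp (l * Real.sqrt (2 * σ / Real.pi) + σ * l ^ 2 / 2) := by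
  have h1 : ∫ x : ℝ, Real.exp (l * |x| - x ^ 2 / (2 * σ))
      = 2 * ∫ x in Set.Ioi (0 : ℝ), Real.exp (l * x - x ^ 2 / (2 * σ)) := by
    rw [← integral_comp_abs (f := fun x => Real.exp (l * x - x ^ 2 / (2 * σ)))]
    simp only [sq_abs]
  have h2 : ∫ x in Set.Ioi (0 : ℝ), Real.exp (l * x - x ^ 2 / (2 * σ))
      = Real.exp (σ * l ^ 2 / 2) *
        ∫ x in Set.Ioi (-(σ * l)), Real.exp (-(1 / (2 * σ)) * x ^ 2) := by
    rw [← integral_const_mul, ← (measurePreserving_sub_right volume (σ * l)).setIntegral_preimage_emb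
      (measurableEmbedding_subRight (σ * l)) _ (Set.Ioi (-(σ * l)))]
    have : (fun x => x - σ * l) ⁻¹' Set.Ioi (-(σ * l)) = Set.Ioi 0 := by
      ext x; simp
    rw [this]
    congr 1
    funext x
    rw [← Real.exp_add]
    congr 1
    field_simp
    ring
  have h3 := integral_Ioi_gaussian_le (1 / (2 * σ)) (σ * l) (by positivity) (by positivity)
  have h4 : Real.pi / (1 / (2 * σ)) = 2 * Real.pi * σ := by field_simp
  rw [h4] at h3
  have h5 : Real.sqrt (2 * Real.pi * σ) * Real.sqrt (2 * σ / Real.pi) = 2 * σ := by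
    rw [← Real.sqrt_mul (by positivity),
      show 2 * Real.pi * σ * (2 * σ / Real.pi) = (2 * σ) ^ 2 by field_simp,
      Real.sqrt_sq (by positivity)]
  have h6 := Real.add_one_le_exp (l * Real.sqrt (2 * σ / Real.pi))
  rw [h1, h2, Real.exp_add]
  calc _ ≤ 2 * (Real.exp (σ * l ^ 2 / 2) * (σ * l + Real.sqrt (2 * Real.pi * σ) / 2)) := by gcongr
    _ = Real.sqrt (2 * Real.pi * σ) * ((l * Real.sqrt (2 * σ / Real.pi) + 1) *
          Real.exp (σ * l ^ 2 / 2)) := by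
        linear_combination (-Real.exp (σ * l ^ 2 / 2) * l) * h5
    _ ≤ _ := by gcongr

theorem stmt17 (σ : ℝ) (hσ : 0 < σ) (m : ℕ) (hm : 0 < m) (r : ℝ)
    (hr : m * Real.sqrt (2 * σ / Real.pi) < r) :
    (2 * Real.pi * σ) ^ (-(m : ℝ) / 2) *
        ∫ x in {x : Fin m → ℝ | r ≤ ∑ i, |x i|},
          Real.exp (-(∑ i, (x i) ^ 2) / (2 * σ)) ≤
      Real.exp (-(r / (2 * Real.sqrt σ) - m / Real.sqrt (2 * Real.pi)) ^ 2 / m) := by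
  have hm' : (0 : ℝ) < m := by exact_mod_cast hm
  set t := r - m * Real.sqrt (2 * σ / Real.pi) with ht
  have ht0 : 0 < t := by linarith
  obtain ⟨l, hl⟩ : ∃ l, l = t / (m * σ) := ⟨_, rfl⟩
  have hl0 : 0 ≤ l := by rw [hl]; positivity
  set g : ℝ → ℝ := fun y => Real.exp (l * |y| - y ^ 2 / (2 * σ)) with hg
  have hgi : Integrable g := integrable_exp_abs_sub_sq σ hσ l
  have hprod : Integrable (fun x : Fin m → ℝ => Real.exp (-(l * r)) * ∏ i, g (x i)) :=
    (Integrable.fintype_prod (f := fun _ => g) (fun _ => hgi)).const_mul _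
  have hexp : ∀ x : Fin m → ℝ, Real.exp (-(l * r)) * ∏ i, g (x i)
      = Real.exp (-(l * r) + (l * ∑ i, |x i| + -(∑ i, (x i) ^ 2) / (2 * σ))) := fun x => by
    rw [hg, ← Real.exp_sum, ← Real.exp_add, sum_sub_distrib, mul_sum, ← sum_div]
    congr 1
    ring
  have hms : MeasurableSet {x : Fin m → ℝ | r ≤ ∑ i, |x i|} :=
    measurableSet_le measurable_const (by fun_prop)
  -- Markov's inequality for `exp (l ‖x‖₁)`.
  have hI : ∫ x in {x : Fin m → ℝ | r ≤ ∑ i, |x i|}, Real.exp (-(∑ i, (x i) ^ 2) / (2 * σ))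
      ≤ Real.exp (-(l * r)) * (∫ y, g y) ^ m := by
    calc _ ≤ ∫ x in {x : Fin m → ℝ | r ≤ ∑ i, |x i|}, Real.exp (-(l * r)) * ∏ i, g (x i) := by
          refine integral_mono_of_nonneg (Filter.Eventually.of_forall fun x => by positivity)
            hprod.integrableOn ?_
          filter_upwards [ae_restrict_mem hms] with x hx
          rw [hexp, Real.exp_le_exp]
          have : l * r ≤ l * ∑ i, |x i| := mul_le_mul_of_nonneg_left hx hl0
          linarith
      _ ≤ ∫ x : Fin m → ℝ, Real.exp (-(l * r)) * ∏ i, g (x i) :=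
          setIntegral_le_integral hprod
            (Filter.Eventually.of_forall fun x => (Real.exp_pos _).le.trans_eq (hexp x).symm)
      _ = _ := by
          rw [integral_const_mul, integral_fintype_prod_volume_eq_pow, Fintype.card_fin]
  have hg0 : 0 ≤ ∫ y, g y := integral_nonneg fun y => (Real.exp_pos _).le
  have hJ := pow_le_pow_left₀ hg0 (abs_mgf_le σ hσ l hl0) m
  have hnorm : (2 * Real.pi * σ) ^ (-(m : ℝ) / 2) * Real.sqrt (2 * Real.pi * σ) ^ m = 1 := by
    rw [Real.sqrt_eq_rpow, ← Real.rpow_natCast, ← Real.rpow_mul (by positivity),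
      ← Real.rpow_add (by positivity)]
    rw [show -(m : ℝ) / 2 + 1 / 2 * m = 0 by ring, Real.rpow_zero]
  have hfin : -(l * r) + m * (l * Real.sqrt (2 * σ / Real.pi) + σ * l ^ 2 / 2)
      = -(t ^ 2 / (2 * m * σ)) := by
    have : r = t + m * Real.sqrt (2 * σ / Real.pi) := by rw [ht]; ring
    rw [this, hl]
    field_simp
    ring
  have hrhs : r / (2 * Real.sqrt σ) - m / Real.sqrt (2 * Real.pi) = t / (2 * Real.sqrt σ) := by
    have hs : 0 < Real.sqrt σ := Real.sqrt_pos.2 hσ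
    have h2 : Real.sqrt (2 * σ / Real.pi) = 2 * Real.sqrt σ / Real.sqrt (2 * Real.pi) := by
      rw [show 2 * σ / Real.pi = 2 ^ 2 * σ / (2 * Real.pi) by field_simp,
        Real.sqrt_div (by positivity), Real.sqrt_mul (by positivity),
        Real.sqrt_sq (by norm_num)]
    rw [ht, h2]
    field_simp
  have hrhs2 : -(t / (2 * Real.sqrt σ)) ^ 2 / m = -(t ^ 2 / (4 * m * σ)) := by
    rw [div_pow, mul_pow, Real.sq_sqrt hσ.le]
    field_simp
    ring
  rw [hrhs, hrhs2]
  calc _ ≤ (2 * Real.pi * σ) ^ (-(m : ℝ) / 2) * (Real.exp (-(l * r)) *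
          (Real.sqrt (2 * Real.pi * σ) *
            Real.exp (l * Real.sqrt (2 * σ / Real.pi) + σ * l ^ 2 / 2)) ^ m) := by
        have := hI.trans (mul_le_mul_of_nonneg_left hJ (Real.exp_pos (-(l * r))).le)
        exact mul_le_mul_of_nonneg_left this (by positivity)
    _ = ((2 * Real.pi * σ) ^ (-(m : ℝ) / 2) * Real.sqrt (2 * Real.pi * σ) ^ m) *
          (Real.exp (-(l * r)) *
            Real.exp (l * Real.sqrt (2 * σ / Real.pi) + σ * l ^ 2 / 2) ^ m) := by
        rw [mul_pow]; ring
    _ = Real.exp (-(t ^ 2 / (2 * m * σ))) := by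
        rw [hnorm, one_mul, ← Real.exp_nat_mul, ← Real.exp_add, hfin]
    _ ≤ _ := by
        rw [Real.exp_le_exp, neg_le_neg_iff]
        gcongr
        norm_num
end
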